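/- Let B be a brace containing a conformal bisubdivision of K_{3,3}, and let C be a cycle of length four in B. Then there exists a perfect matching M of B such that C is M-conformal and B contains an M-conformal bisubdivision of K_{3,3}. -/

import Mathlib

namespace Paper

open SimpleGraph

variable {V : Type*} {W : Type*}

/-- `M` is a perfect matching of the vertex set `S` in the graph `G`:
a set of pairwise disjoint edges of `G`, all within `S`, covering every vertex of `S`. -/
def IsPMOn (G : SimpleGraph V) (S : Set V) (M : Set (Sym2 V)) : Prop :=
  (∀ e ∈ M, e ∈ G.edgeSet) ∧ (∀ e ∈ M, ∀ v ∈ e, v ∈ S) ∧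
    ∀ v ∈ S, ∃! e, e ∈ M ∧ v ∈ e

/-- `M` is a perfect matching of `G`. -/
def IsPM (G : SimpleGraph V) (M : Set (Sym2 V)) : Prop :=
  IsPMOn G Set.univ M

/-- The edges in `F` are pairwise vertex-disjoint. -/
def PairwiseDisjointEdges (F : Set (Sym2 V)) : Prop :=
  ∀ e ∈ F, ∀ f ∈ F, e ≠ f → ∀ x : V, x ∈ e → x ∉ f

/-- All edges of `G` have both endpoints in `S`. -/
def EdgesWithin (G : SimpleGraph V) (S : Set V) : Prop :=
  ∀ ⦃x y : V⦄, G.Adj x y → x ∈ S ∧ y ∈ S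

def ConnectedOn (G : SimpleGraph V) (S : Set V) : Prop :=
  S.Nonempty ∧ ∀ x ∈ S, ∀ y ∈ S, G.Reachable x y

/-- The graph `G` with vertex set `S` is a brace: it is connected and every matching of
size at most two extends to a perfect matching. -/
def IsBraceOn (G : SimpleGraph V) (S : Set V) : Prop :=
  EdgesWithin G S ∧ ConnectedOn G S ∧
    ∀ F : Set (Sym2 V), F ⊆ G.edgeSet → PairwiseDisjointEdges F → F.ncard ≤ 2 →
      ∃ M, IsPMOn G S M ∧ F ⊆ M

def IsBrace (G : SimpleGraph V) : Prop :=
  IsBraceOn G Set.univ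

def IsBipartitionOf (G : SimpleGraph V) (V1 V2 : Set V) : Prop :=
  Disjoint V1 V2 ∧ V1 ∪ V2 = Set.univ ∧ ∀ ⦃x y : V⦄, G.Adj x y → (x ∈ V1 ↔ y ∈ V2)

def IsBipartite (G : SimpleGraph V) : Prop :=
  ∃ V1 V2 : Set V, IsBipartitionOf G V1 V2

def MatchingCoveredOn (G : SimpleGraph V) (S : Set V) : Prop :=
  EdgesWithin G S ∧ ConnectedOn G S ∧ ∀ e ∈ G.edgeSet, ∃ M, IsPMOn G S M ∧ e ∈ M

def MatchingCovered (G : SimpleGraph V) : Prop :=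
  MatchingCoveredOn G Set.univ

/-- Every vertex of `A` is covered exactly once by an edge of `M ∩ Es`;
i.e. `M ∩ Es` is a perfect matching of the subgraph with vertex set `A` and edge set `Es`. -/
def MatchesExactly (M Es : Set (Sym2 V)) (A : Set V) : Prop :=
  ∀ v ∈ A, ∃! e, e ∈ M ∧ e ∈ Es ∧ v ∈ e

/-- `M` restricted to the edges of `P` with both endpoints in `A` is a
perfect matching of `A`; i.e. `M ∩ E(P ∩ A)` is a perfect matching of `P ∩ A`. -/
def WalkMConfOn (G : SimpleGraph V) (M : Set (Sym2 V)) {u v : V} (P : G.Walk u v)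
    (A : Set V) : Prop :=
  ∀ x ∈ A, ∃! e : Sym2 V, e ∈ M ∧ e ∈ P.edges ∧ (∀ y ∈ e, y ∈ A) ∧ x ∈ e

/-- The path `P` is `M`-conformal: `M ∩ E(P)` is a perfect matching of `P`. -/
def MConformalWalk (G : SimpleGraph V) (M : Set (Sym2 V)) {u v : V} (P : G.Walk u v) : Prop :=
  WalkMConfOn G M P {x | x ∈ P.support}

/-- The path `P` is internally `M`-conformal: removing both endpoints leaves
an `M`-conformal path. -/
def InternallyMConformal (G : SimpleGraph V) (M : Set (Sym2 V)) {u v : V}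
    (P : G.Walk u v) : Prop :=
  WalkMConfOn G M P {x | x ∈ P.support ∧ x ≠ u ∧ x ≠ v}

/-- The path `P` is `M`-alternating: there is a set `S` of endpoints of `P`
such that `P − S` is `M`-conformal. -/
def MAlternating (G : SimpleGraph V) (M : Set (Sym2 V)) {u v : V} (P : G.Walk u v) : Prop :=
  ∃ S ⊆ ({u, v} : Set V), WalkMConfOn G M P {x | x ∈ P.support ∧ x ∉ S}

/-- The cycle `C` is `M`-conformal: `M ∩ E(C)` is a perfect matching of `C`. -/
def MConformalCycle (G : SimpleGraph V) (M : Set (Sym2 V)) {c : V} (C : G.Walk c c) : Prop :=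
  ∀ x ∈ C.support, ∃! e, e ∈ M ∧ e ∈ C.edges ∧ x ∈ e

/-- The cycle `C` is conformal in the graph `G` with vertex set `S`:
`G − V(C)` has a perfect matching. -/
def ConformalCycleOn (G : SimpleGraph V) (S : Set V) {c : V} (C : G.Walk c c) : Prop :=
  ∃ M, IsPMOn G (S \ {x | x ∈ C.support}) M

def ConformalCycle (G : SimpleGraph V) {c : V} (C : G.Walk c c) : Prop :=
  ConformalCycleOn G Set.univ C

/-- The four vertices appear on the cycle `C` in the listed cyclic order. -/
def InCyclicOrder (G : SimpleGraph V) {c : V} (C : G.Walk c c) (s1 s2 t1 t2 : V) : Prop :=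
  ∃ n : ℕ, List.Sublist [s1, s2, t1, t2] (C.support.tail.rotate n) ∨
    List.Sublist [s1, s2, t1, t2] (C.support.tail.reverse.rotate n)

/-- The paths `P1` (from `s1` to `t1`) and `P2` (from `s2` to `t2`) form a matching
cross over the cycle `C` with respect to the perfect matching `M` of `(G, S)`. -/
def IsMatchingCrossOn (G : SimpleGraph V) (S : Set V) {c s1 t1 s2 t2 : V}
    (C : G.Walk c c) (M : Set (Sym2 V)) (P1 : G.Walk s1 t1) (P2 : G.Walk s2 t2) : Prop :=
  IsPMOn G S M ∧ [s1, s2, t1, t2].Nodup ∧ InCyclicOrder G C s1 s2 t1 t2 ∧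
    P1.IsPath ∧ P2.IsPath ∧ MAlternating G M P1 ∧ MAlternating G M P2 ∧
    (∀ x : V, x ∈ P1.support → x ∉ P2.support) ∧
    (∀ x ∈ P1.support, x ≠ s1 → x ≠ t1 → x ∉ C.support) ∧
    (∀ x ∈ P2.support, x ≠ s2 → x ≠ t2 → x ∉ C.support)

def HasMatchingCrossOn (G : SimpleGraph V) (S : Set V) {c : V} (C : G.Walk c c) : Prop :=
  ∃ (M : Set (Sym2 V)) (s1 t1 s2 t2 : V) (P1 : G.Walk s1 t1) (P2 : G.Walk s2 t2),
    IsMatchingCrossOn G S C M P1 P2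

def HasMatchingCross (G : SimpleGraph V) {c : V} (C : G.Walk c c) : Prop :=
  HasMatchingCrossOn G Set.univ C

/-- `C + P1 + P2` is a conformal subgraph of `(G, S)`. -/
def CrossConformalOn (G : SimpleGraph V) (S : Set V) {c s1 t1 s2 t2 : V}
    (C : G.Walk c c) (P1 : G.Walk s1 t1) (P2 : G.Walk s2 t2) : Prop :=
  ∃ N, IsPMOn G S N ∧
    MatchesExactly N
      ({f | f ∈ C.edges} ∪ {f | f ∈ P1.edges} ∪ {f | f ∈ P2.edges})
      ({x | x ∈ C.support} ∪ {x | x ∈ P1.support} ∪ {x | x ∈ P2.support})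

/-- There is a conformal cross over the cycle `C` in `G`. -/
def HasConformalCross (G : SimpleGraph V) {c : V} (C : G.Walk c c) : Prop :=
  ∃ (M : Set (Sym2 V)) (s1 t1 s2 t2 : V) (P1 : G.Walk s1 t1) (P2 : G.Walk s2 t2),
    IsMatchingCrossOn G Set.univ C M P1 P2 ∧ CrossConformalOn G Set.univ C P1 P2

/-- A bisubdivision of the graph `H` inside the graph `G`: every edge of `H` is replaced
by a path of odd length (i.e., subdivided an even number of times), and those paths
pairwise meet only in branch vertices. -/
structure Bisubdivision (H : SimpleGraph W) (G : SimpleGraph V) where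
  bv : W → V
  bv_inj : Function.Injective bv
  link : ∀ ⦃x y : W⦄, H.Adj x y → G.Walk (bv x) (bv y)
  link_isPath : ∀ ⦃x y : W⦄ (h : H.Adj x y), (link h).IsPath
  link_odd : ∀ ⦃x y : W⦄ (h : H.Adj x y), Odd (link h).length
  link_symm : ∀ ⦃x y : W⦄ (h : H.Adj x y), link h.symm = (link h).reverse
  link_branch : ∀ ⦃x y : W⦄ (h : H.Adj x y) (z : W), bv z ∈ (link h).support → z = x ∨ z = y
  link_meet : ∀ ⦃x y x' y' : W⦄ (h : H.Adj x y) (h' : H.Adj x' y'), s(x, y) ≠ s(x', y') →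
    ∀ v : V, v ∈ (link h).support → v ∈ (link h').support →
      (v = bv x ∨ v = bv y) ∧ (v = bv x' ∨ v = bv y')

def Bisubdivision.verts {H : SimpleGraph W} {G : SimpleGraph V}
    (L : Bisubdivision H G) : Set V :=
  {v | ∃ (x y : W) (h : H.Adj x y), v ∈ (L.link h).support}

def Bisubdivision.edgeSet {H : SimpleGraph W} {G : SimpleGraph V}
    (L : Bisubdivision H G) : Set (Sym2 V) :=
  {e | ∃ (x y : W) (h : H.Adj x y), e ∈ (L.link h).edges}

/-- The bisubdivision `L` is an `M`-conformal subgraph of `G`. -/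
def Bisubdivision.MConformal {H : SimpleGraph W} {G : SimpleGraph V}
    (L : Bisubdivision H G) (M : Set (Sym2 V)) : Prop :=
  MatchesExactly M L.edgeSet L.verts

/-- The bisubdivision `L` is a conformal subgraph of `(G, S)`. -/
def Bisubdivision.ConformalOn {H : SimpleGraph W} {G : SimpleGraph V}
    (L : Bisubdivision H G) (S : Set V) : Prop :=
  ∃ M, IsPMOn G S M ∧ L.MConformal M

abbrev K33 : SimpleGraph (Fin 3 ⊕ Fin 3) := completeBipartiteGraph (Fin 3) (Fin 3)

/-- `G` contains a conformal bisubdivision of `K_{3,3}`. -/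
def ContainsK33 (G : SimpleGraph V) : Prop :=
  ∃ L : Bisubdivision K33 G, L.ConformalOn Set.univ

def K33Free (G : SimpleGraph V) : Prop :=
  ¬ ContainsK33 G

def C4verts (a1 b1 a2 b2 : V) : Set V := {a1, b1, a2, b2}

def C4edges (a1 b1 a2 b2 : V) : Set (Sym2 V) := {s(a1, b1), s(b1, a2), s(a2, b2), s(b2, a1)}

/-- `a1 b1 a2 b2` is a cycle of length four in `G`. -/
def IsC4In (G : SimpleGraph V) (a1 b1 a2 b2 : V) : Prop :=
  [a1, b1, a2, b2].Nodup ∧ G.Adj a1 b1 ∧ G.Adj b1 a2 ∧ G.Adj a2 b2 ∧ G.Adj b2 a1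

/-- `B` is a 4-cycle sum of the graphs `Bi i` (with vertex sets `Si i`)
at the common conformal 4-cycle `a1 b1 a2 b2`. -/
def IsFourCycleSum {ℓ : ℕ} (B : SimpleGraph V) (Bi : Fin ℓ → SimpleGraph V)
    (Si : Fin ℓ → Set V) (a1 b1 a2 b2 : V) : Prop :=
  (∀ i, EdgesWithin (Bi i) (Si i)) ∧
  (∀ i, IsC4In (Bi i) a1 b1 a2 b2) ∧
  (∀ i, ∃ M, IsPMOn (Bi i) (Si i \ C4verts a1 b1 a2 b2) M) ∧
  (∀ i j, i ≠ j → Si i ∩ Si j = C4verts a1 b1 a2 b2) ∧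
  (⋃ i, Si i) = Set.univ ∧
  ∃ D ⊆ C4edges a1 b1 a2 b2, B.edgeSet = (⋃ i, (Bi i).edgeSet) \ D

/-- `B` is a maximal 4-cycle sum of the braces `Bi i` at the 4-cycle `a1 b1 a2 b2`. -/
def IsMaxFourCycleSumOfBraces {ℓ : ℕ} (B : SimpleGraph V) (Bi : Fin ℓ → SimpleGraph V)
    (Si : Fin ℓ → Set V) (a1 b1 a2 b2 : V) : Prop :=
  IsFourCycleSum B Bi Si a1 b1 a2 b2 ∧ (∀ i, IsBraceOn (Bi i) (Si i)) ∧
    ¬ ∃ ℓ' : ℕ, ℓ < ℓ' ∧ ∃ (Hi : Fin ℓ' → SimpleGraph V) (Ti : Fin ℓ' → Set V),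
      IsFourCycleSum B Hi Ti a1 b1 a2 b2 ∧ ∀ i, IsBraceOn (Hi i) (Ti i)

/-- `∂(X)`: the set of edges of `G` with exactly one endpoint in `X`. -/
def edgeCut (G : SimpleGraph V) (X : Set V) : Set (Sym2 V) :=
  {e | e ∈ G.edgeSet ∧ ∃ x y : V, e = s(x, y) ∧ x ∈ X ∧ y ∉ X}

/-- `∂(X)` is a tight cut of the graph `G` with vertex set `S`. -/
def IsTightCutOn (G : SimpleGraph V) (S X : Set V) : Prop :=
  ∀ M, IsPMOn G S M → (edgeCut G X ∩ M).ncard = 1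

def IsTightCut (G : SimpleGraph V) (X : Set V) : Prop :=
  IsTightCutOn G Set.univ X

/-- The minority of `X` with respect to the colour classes `V1`, `V2`. -/
noncomputable def minority (V1 V2 X : Set V) : Set V :=
  if (X ∩ V1).ncard < (X ∩ V2).ncard then X ∩ V1 else X ∩ V2

/-- `P1` and `P2` are `M`-alternating paths of the same type. -/
def SameType (G : SimpleGraph V) (M : Set (Sym2 V)) {s1 t1 s2 t2 : V}
    (P1 : G.Walk s1 t1) (P2 : G.Walk s2 t2) : Prop :=
  (InternallyMConformal G M P1 ∧ InternallyMConformal G M P2) ∨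
  (MConformalWalk G M P1 ∧ MConformalWalk G M P2) ∨
  ((¬ InternallyMConformal G M P1 ∧ ¬ MConformalWalk G M P1) ∧
    (¬ InternallyMConformal G M P2 ∧ ¬ MConformalWalk G M P2))

/-- There is a strong matching cross over `C` in `(G, S)` w.r.t. colour classes `V1, V2`. -/
def HasStrongMatchingCrossOn (G : SimpleGraph V) (S V1 V2 : Set V) {c : V}
    (C : G.Walk c c) : Prop :=
  ∃ (M : Set (Sym2 V)) (s1 t1 s2 t2 : V) (P1 : G.Walk s1 t1) (P2 : G.Walk s2 t2),
    IsMatchingCrossOn G S C M P1 P2 ∧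
    (V1 ∩ {s1, s2, t1, t2}).ncard = (V2 ∩ {s1, s2, t1, t2}).ncard ∧
    SameType G M P1 P2

/-- `s1 s2 t1 t2` appear in this cyclic order on the 4-cycle `a1 b1 a2 b2`. -/
def CyclicOrderC4 (a1 b1 a2 b2 s1 s2 t1 t2 : V) : Prop :=
  ∃ n : ℕ, [s1, s2, t1, t2] = [a1, b1, a2, b2].rotate n ∨
    [s1, s2, t1, t2] = [b2, a2, b1, a1].rotate n

/-- `P1, P2` form a matching cross over the 4-cycle `a1 b1 a2 b2` w.r.t. `M`. -/
def IsCrossOverC4 (G : SimpleGraph V) (M : Set (Sym2 V)) (a1 b1 a2 b2 : V)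
    {s1 t1 s2 t2 : V} (P1 : G.Walk s1 t1) (P2 : G.Walk s2 t2) : Prop :=
  [s1, s2, t1, t2].Nodup ∧ CyclicOrderC4 a1 b1 a2 b2 s1 s2 t1 t2 ∧
    P1.IsPath ∧ P2.IsPath ∧ MAlternating G M P1 ∧ MAlternating G M P2 ∧
    (∀ z : V, z ∈ P1.support → z ∉ P2.support) ∧
    (∀ z ∈ P1.support, z ≠ s1 → z ≠ t1 → z ∉ C4verts a1 b1 a2 b2) ∧
    (∀ z ∈ P2.support, z ≠ s2 → z ≠ t2 → z ∉ C4verts a1 b1 a2 b2)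

/-- The Heawood graph on `ZMod 14`. -/
def heawood : SimpleGraph (ZMod 14) :=
  SimpleGraph.fromRel fun i j => j = i + 1 ∨ (Even i.val ∧ j = i + 5)

/-- The Rotunda: three cubes glued along a common 4-cycle whose edges are then deleted. -/
def rotunda : SimpleGraph (Fin 4 ⊕ Fin 3 × Fin 4) :=
  SimpleGraph.fromRel fun x y =>
    match x, y with
    | Sum.inl j, Sum.inr p => j = p.2
    | Sum.inr p, Sum.inr q => p.1 = q.1 ∧ q.2 = p.2 + 1
    | _, _ => False

/-- `F` is an `S`-cover in `G`. -/
def IsSCover (G : SimpleGraph V) (S : Set V) (F : Set (Sym2 V)) : Prop :=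
  F ⊆ G.edgeSet ∧ (∀ e ∈ F, ∃ v ∈ S, v ∈ e) ∧ ∀ v ∈ S, ∃ e ∈ F, v ∈ e

/-- `F` is contained in some perfect matching of `G`. -/
def Extendible (G : SimpleGraph V) (F : Set (Sym2 V)) : Prop :=
  ∃ M, IsPM G M ∧ F ⊆ M

/-- `(G, S)` is an `F`-instance of 2-MLP for `(a1, a2)` and `(b1, b2)`. -/
def TwoMLPInstanceOn (G : SimpleGraph V) (S : Set V) (a1 a2 b1 b2 : V)
    (F : Set (Sym2 V)) : Prop :=
  ∃ M, IsPMOn G S M ∧ F ⊆ M ∧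
    ∃ (P1 : G.Walk a1 b1) (P2 : G.Walk a2 b2), P1.IsPath ∧ P2.IsPath ∧
      InternallyMConformal G M P1 ∧ InternallyMConformal G M P2 ∧
      ∀ x : V, x ∈ P1.support → x ∉ P2.support

/-- `B − u − v + pq`: delete the vertices `u, v` and add the edge `pq`. -/
def deleteAdd (B : SimpleGraph V) (u v p q : V) : SimpleGraph V :=
  SimpleGraph.fromRel fun x y =>
    (B.Adj x y ∨ (x = p ∧ y = q)) ∧ x ≠ u ∧ x ≠ v ∧ y ≠ u ∧ y ≠ v

/-- `B` plus two new vertices `x = Sum.inr 0` and `y = Sum.inr 1` together with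
the edges `xy, x b1, x b2, y a1, y a2`. -/
def plusXY (B : SimpleGraph V) (a1 a2 b1 b2 : V) : SimpleGraph (V ⊕ Fin 2) :=
  SimpleGraph.fromRel fun p q =>
    (∃ a b : V, p = Sum.inl a ∧ q = Sum.inl b ∧ B.Adj a b) ∨
    (p = Sum.inr 0 ∧ q = Sum.inr 1) ∨
    (p = Sum.inr 0 ∧ (q = Sum.inl b1 ∨ q = Sum.inl b2)) ∨
    (p = Sum.inr 1 ∧ (q = Sum.inl a1 ∨ q = Sum.inl a2))

/-- The endpoints `q1, q2` (on the 4-cycle) belong to the same colour class. -/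
def PrecrossDaring (V1 V2 : Set V) (q1 q2 : V) : Prop :=
  (q1 ∈ V1 ∧ q2 ∈ V1) ∨ (q1 ∈ V2 ∧ q2 ∈ V2)

/-- `(P1, P2, Q, M)` is a diffuse `C'`-`M`-precross through the 4-cycle `a1 b1 a2 b2`
in the graph `G` with vertex set `S` and colour classes `V1, V2`. -/
def DiffusePrecross (G : SimpleGraph V) (S V1 V2 : Set V) (a1 b1 a2 b2 : V)
    {c p1 q1 p2 q2 x1 x2 : V} (C' : G.Walk c c) (M : Set (Sym2 V))
    (P1 : G.Walk p1 q1) (P2 : G.Walk p2 q2) (Q : G.Walk x1 x2) : Prop :=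
  IsPMOn G S M ∧ P1.IsPath ∧ P2.IsPath ∧ Q.IsPath ∧
  MAlternating G M P1 ∧ MAlternating G M P2 ∧ MAlternating G M Q ∧
  (∀ z : V, z ∈ P1.support → z ∉ P2.support) ∧
  (∀ z : V, z ∈ P1.support → z ∉ Q.support) ∧
  (∀ z : V, z ∈ P2.support → z ∉ Q.support) ∧
  (∀ z ∈ P1.support, z ≠ p1 → z ≠ q1 → z ∉ C'.support) ∧
  (∀ z ∈ P2.support, z ≠ p2 → z ≠ q2 → z ∉ C'.support) ∧
  (∀ z ∈ Q.support, z ≠ x1 → z ≠ x2 → z ∉ C'.support) ∧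
  x1 ∈ C'.support ∧ x2 ∈ C'.support ∧
  p1 ∈ C'.support ∧ q1 ∈ C4verts a1 b1 a2 b2 ∧
  p2 ∈ C'.support ∧ q2 ∈ C4verts a1 b1 a2 b2 ∧
  (∀ Wk : G.Walk p1 p2, (∀ e ∈ Wk.edges, e ∈ C'.edges) → ∃ z ∈ Wk.support, z ∈ Q.support) ∧
  (∀ U ∈ ({V1, V2} : Set (Set V)), (q1 ∈ U ∨ q2 ∈ U) →
    ∃ q : V, (q = q1 ∨ q = q2) ∧ q ∈ U ∧ ∃ e ∈ M, e ∈ C4edges a1 b1 a2 b2 ∧ q ∈ e)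

/-- A daring diffuse precross is successful. -/
def PrecrossSuccessful (G : SimpleGraph V) (V1 V2 : Set V) (M : Set (Sym2 V))
    {p1 q1 p2 q2 : V} (P1 : G.Walk p1 q1) (P2 : G.Walk p2 q2) : Prop :=
  PrecrossDaring V1 V2 q1 q2 ∧
  ((InternallyMConformal G M P1 ∧ MConformalWalk G M P2) ∨
   (InternallyMConformal G M P2 ∧ MConformalWalk G M P1) ∨
   (Even P1.length ∧ Even P2.length ∧
     ((∃ e ∈ M, e ∈ P1.edges ∧ p1 ∈ e) ↔ ¬ ∃ e ∈ M, e ∈ P2.edges ∧ p2 ∈ e)))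

/-!
A bisubdivision of `K₃,₃` together with a perfect matching of the vertices outside it is recorded
as a spanning frame. Fix a perfect matching `M`, and among all spanning frames choose one with the
fewest edges outside `M`. For this frame every edge of `M` that it does not use lies on an ear: a
path, alternating between `M` and the matching of the rest, whose two ends `u` and `v` lie inside
the paths. The nine paths are indexed by `Fin 3 × Fin 3`, and if `u` and `v` are not on two paths
with both indices distinct, rerouting along the ear gives a cheaper frame. Otherwise let `u` lie on
the path from `a i` to `b j` and `v` on the path from `a k` to `b l`. Then making `u` and `v` branch
vertices in place of `a i` and `b l` gives a frame of the same cost that contains the ear. In this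
way two prescribed edges of `M` can be brought into the frame. A permutation `σ` of `Fin 3` yields
a perfect matching of the frame, in which the path from `a i` to `b (σ i)` is matched including its
ends and every other path in its interior. Two edges of `M` are both covered by such a matching
unless they are in conflict, and conflicts are again removed by exchanging branch vertices.
Two opposite edges of a 4-cycle extend to a perfect matching, to which this is applied.
-/

/-- The edges joining the first and second, the third and fourth, … vertex of a vertex sequence;
for a path of odd length this is its perfect matching. -/
def pairEdges : List V → Multiset (Sym2 V)
  | x :: y :: l => s(x, y) ::ₘ pairEdges l
  | _ => 0

/-- The edges joining consecutive vertices of a vertex sequence. -/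
def pathEdges : List V → Multiset (Sym2 V)
  | x :: y :: l => s(x, y) ::ₘ pathEdges (y :: l)
  | _ => 0

/-- The endpoints of a multiset of edges, with multiplicity, so that the edges form a matching
exactly when this multiset has no duplicates. -/
def endpoints (N : Multiset (Sym2 V)) : Multiset V := N.bind Sym2.toMultiset

section Lists

@[simp] lemma pairEdges_nil : pairEdges ([] : List V) = 0 := by simp [pairEdges]

@[simp] lemma pairEdges_singleton (x : V) : pairEdges [x] = 0 := by simp [pairEdges]

@[simp] lemma pairEdges_cons_cons (x y : V) (l : List V) :
    pairEdges (x :: y :: l) = s(x, y) ::ₘ pairEdges l := by simp [pairEdges]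

@[simp] lemma pathEdges_nil : pathEdges ([] : List V) = 0 := by simp [pathEdges]

@[simp] lemma pathEdges_singleton (x : V) : pathEdges [x] = 0 := by simp [pathEdges]

@[simp] lemma pathEdges_cons_cons (x y : V) (l : List V) :
    pathEdges (x :: y :: l) = s(x, y) ::ₘ pathEdges (y :: l) := by simp [pathEdges]

@[simp] lemma endpoints_zero : endpoints (0 : Multiset (Sym2 V)) = 0 := rfl

@[simp] lemma endpoints_add (A B : Multiset (Sym2 V)) :
    endpoints (A + B) = endpoints A + endpoints B := Multiset.add_bind _ _ _

@[simp] lemma endpoints_cons (x y : V) (N : Multiset (Sym2 V)) :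
    endpoints (s(x, y) ::ₘ N) = x ::ₘ y ::ₘ endpoints N := by
  have hxy : s(x, y).toMultiset = x ::ₘ y ::ₘ 0 := rfl
  simp [endpoints, hxy]

@[simp] lemma endpoints_sum {ι : Type*} (s : Finset ι) (f : ι → Multiset (Sym2 V)) :
    endpoints (∑ i ∈ s, f i) = ∑ i ∈ s, endpoints (f i) :=
  map_sum ({ toFun := endpoints, map_zero' := endpoints_zero, map_add' := endpoints_add } :
    Multiset (Sym2 V) →+ Multiset V) f s

lemma mem_endpoints {N : Multiset (Sym2 V)} {v : V} : v ∈ endpoints N ↔ ∃ e ∈ N, v ∈ e := by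
  simp [endpoints]

lemma endpoints_pairEdges {l : List V} (hl : Even l.length) : endpoints (pairEdges l) = l := by
  induction l using List.twoStepInduction with
  | nil => simp
  | singleton x => simp at hl
  | cons_cons x y l ih => simp [ih (by simpa [parity_simps] using hl)]

lemma pairEdges_append {p : List V} (hp : Even p.length) (q : List V) :
    pairEdges (p ++ q) = pairEdges p + pairEdges q := by
  induction p using List.twoStepInduction with
  | nil => simp
  | singleton x => simp at hp
  | cons_cons x y l ih => simp [ih (by simpa [parity_simps] using hp)]

lemma pairEdges_reverse {l : List V} (hl : Even l.length) :
    pairEdges l.reverse = pairEdges l := by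
  induction l using List.twoStepInduction with
  | nil => simp
  | singleton x => simp
  | cons_cons x y l ih =>
    have hl' : Even l.length := by simpa [parity_simps] using hl
    rw [List.reverse_cons, List.reverse_cons, List.append_assoc,
      pairEdges_append (by simpa using hl'), ih hl']
    simp [Sym2.eq_swap, ← Multiset.singleton_add, add_comm]

lemma pathEdges_append_cons (p q : List V) (x : V) :
    pathEdges (p ++ x :: q) = pathEdges (p ++ [x]) + pathEdges (x :: q) := by
  induction p using List.twoStepInduction with
  | nil => simp
  | singleton y => simp
  | cons_cons y z p _ ih => simpa using ih z

lemma pathEdges_reverse (l : List V) : pathEdges l.reverse = pathEdges l := by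
  induction l using List.twoStepInduction with
  | nil => simp
  | singleton x => simp
  | cons_cons x y l _ ih =>
    have hrev : (x :: y :: l).reverse = l.reverse ++ y :: [x] := by simp
    rw [hrev, pathEdges_append_cons, ← List.reverse_cons, ih]
    simp [Sym2.eq_swap, ← Multiset.singleton_add, add_comm]

lemma pathEdges_eq_add {l : List V} (hl : Even l.length) (x y : V) :
    pathEdges (x :: (l ++ [y])) = pairEdges (x :: (l ++ [y])) + pairEdges l := by
  induction l using List.twoStepInduction generalizing x with
  | nil => simp
  | singleton z => simp at hl
  | cons_cons z t l ih =>
    simp only [List.cons_append, pathEdges_cons_cons, pairEdges_cons_cons,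
      ih (by simpa [parity_simps] using hl), Multiset.cons_add, Multiset.add_cons]
    rw [Multiset.cons_swap]

lemma pairEdges_le_pathEdges (l : List V) : pairEdges l ≤ pathEdges l := by
  induction l using List.twoStepInduction with
  | nil => simp
  | singleton x => simp
  | cons_cons x y l ih =>
    rw [pairEdges_cons_cons, pathEdges_cons_cons]
    refine Multiset.cons_le_cons _ (ih.trans ?_)
    cases l with
    | nil => simp
    | cons z l => simpa using Multiset.le_cons_self _ _

lemma mem_of_mem_pathEdges {l : List V} {x : V} {e : Sym2 V} (he : e ∈ pathEdges l)
    (hx : x ∈ e) : x ∈ l := by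
  induction l using List.twoStepInduction with
  | nil => simp at he
  | singleton y => simp at he
  | cons_cons y z l _ ih =>
    rw [pathEdges_cons_cons, Multiset.mem_cons] at he
    rcases he with rfl | he
    · aesop
    · exact List.mem_cons_of_mem _ (ih z he)

lemma mem_of_mem_pairEdges {l : List V} {x : V} {e : Sym2 V} (he : e ∈ pairEdges l)
    (hx : x ∈ e) : x ∈ l :=
  mem_of_mem_pathEdges (Multiset.mem_of_le (pairEdges_le_pathEdges l) he) hx

lemma exists_append_of_mem_pairEdges {l : List V} {e : Sym2 V} (he : e ∈ pairEdges l) :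
    ∃ p x y q, l = p ++ x :: y :: q ∧ Even p.length ∧ e = s(x, y) := by
  induction l using List.twoStepInduction with
  | nil => simp at he
  | singleton x => simp at he
  | cons_cons x y l ih =>
    rw [pairEdges_cons_cons, Multiset.mem_cons] at he
    rcases he with rfl | he
    · exact ⟨[], x, y, l, rfl, by simp, rfl⟩
    · obtain ⟨p, z, t, q, rfl, hp, rfl⟩ := ih he
      exact ⟨x :: y :: p, z, t, q, rfl, by simpa [parity_simps] using hp, rfl⟩

end Lists

/-- A perfect matching of a bipartite graph, encoded by the involution `mate` that exchanges the
two ends of every matching edge, together with a proper two-colouring of the graph. -/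
structure ColoredMatching (G : SimpleGraph V) where
  color : V → Bool
  mate : V → V
  color_of_adj : ∀ {x y}, G.Adj x y → color x = !color y
  mate_mate : ∀ x, mate (mate x) = x
  adj_mate : ∀ x, G.Adj x (mate x)

namespace ColoredMatching

variable {G : SimpleGraph V} (M : ColoredMatching G)

/-- The same matching with the two colours exchanged; it turns every statement about the `a`-side
of a frame into one about the `b`-side. -/
def swap : ColoredMatching G where
  color x := !M.color x
  mate := M.mate
  color_of_adj h := by rw [M.color_of_adj h]
  mate_mate := M.mate_mate
  adj_mate := M.adj_mate

/-- The edges of the matching. -/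
def edgeSet : Set (Sym2 V) := {e | ∃ x, e = s(x, M.mate x)}

@[simp] lemma swap_color (x : V) : M.swap.color x = !M.color x := rfl

@[simp] lemma swap_edgeSet : M.swap.edgeSet = M.edgeSet := rfl

@[simp] lemma swap_swap : M.swap.swap = M := by simp [swap]

lemma mk_mate_mem_edgeSet (x : V) : s(x, M.mate x) ∈ M.edgeSet := ⟨x, rfl⟩

variable {M}

lemma eq_of_mem_edgeSet {e : Sym2 V} (he : e ∈ M.edgeSet) {x : V} (hx : x ∈ e) :
    e = s(x, M.mate x) := by
  obtain ⟨y, rfl⟩ := he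
  rcases Sym2.mem_iff.1 hx with rfl | rfl
  · rfl
  · rw [M.mate_mate, Sym2.eq_swap]

lemma mk_mem_edgeSet {x y : V} : s(x, y) ∈ M.edgeSet ↔ y = M.mate x := by
  refine ⟨fun h => ?_, fun h => ⟨x, by rw [h]⟩⟩
  exact Sym2.congr_right.1 (eq_of_mem_edgeSet h (Sym2.mem_mk_left x y))

lemma edgeSet_subset : M.edgeSet ⊆ G.edgeSet := by
  rintro _ ⟨x, rfl⟩
  exact M.adj_mate x

@[simp] lemma color_mate (x : V) : M.color (M.mate x) = !M.color x := by
  simp [M.color_of_adj (M.adj_mate x)]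

lemma color_eq_iff_odd (l : List V) (x y : V)
    (h : ∀ e ∈ pathEdges (x :: (l ++ [y])), e ∈ G.edgeSet) :
    M.color x = M.color y ↔ Odd l.length := by
  induction l generalizing x with
  | nil => simp [M.color_of_adj (show G.Adj x y by simpa using h)]
  | cons z l ih =>
    simp only [List.cons_append, pathEdges_cons_cons, Multiset.mem_cons, forall_eq_or_imp,
      mem_edgeSet] at h
    rw [List.length_cons, Nat.odd_add_one, ← ih z h.2, M.color_of_adj h.1]
    cases M.color z <;> cases M.color y <;> simp

end ColoredMatching

/-- The vertex sequences of a bisubdivision of `K₃,₃` with branch vertices `a i` and `b j`, the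
interior vertices `inner i j` of the path from `a i` to `b j`, and a matching `rest` of the
remaining vertices. Nothing is required here; see `K33Frame.IsSpanning`. -/
structure K33Frame (V : Type*) where
  a : Fin 3 → V
  b : Fin 3 → V
  inner : Fin 3 → Fin 3 → List V
  rest : Multiset (Sym2 V)

namespace K33Frame

/-- The path from `a i` to `b j`. -/
def path (L : K33Frame V) (i j : Fin 3) : List V := L.a i :: (L.inner i j ++ [L.b j])

/-- All vertices of the bisubdivision and of the matching of the rest, with multiplicity. -/
def verts (L : K33Frame V) : Multiset V :=
  (∑ i, ({L.a i} : Multiset V)) + (∑ j, ({L.b j} : Multiset V)) +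
    (∑ i, ∑ j, (L.inner i j : Multiset V)) + endpoints L.rest

/-- All edges of the bisubdivision and of the matching of the rest, with multiplicity. -/
def edges (L : K33Frame V) : Multiset (Sym2 V) := (∑ i, ∑ j, pathEdges (L.path i j)) + L.rest

/-- The same frame with the branch vertices on either side renumbered. -/
def relabel (L : K33Frame V) (σ τ : Equiv.Perm (Fin 3)) : K33Frame V where
  a i := L.a (σ i)
  b j := L.b (τ j)
  inner i j := L.inner (σ i) (τ j)
  rest := L.rest

/-- The same frame with the two sides exchanged and all paths reversed. -/
def swap (L : K33Frame V) : K33Frame V where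
  a := L.b
  b := L.a
  inner i j := (L.inner j i).reverse
  rest := L.rest

/-- The frame describes a bisubdivision of `K₃,₃` in `G` together with a perfect matching of the
vertices outside it. -/
structure IsSpanning (G : SimpleGraph V) (L : K33Frame V) : Prop where
  nodup : L.verts.Nodup
  mem_verts : ∀ v, v ∈ L.verts
  even_inner : ∀ i j, Even (L.inner i j).length
  mem_edgeSet : ∀ e ∈ L.edges, e ∈ G.edgeSet

/-- The branch vertices `a i` have colour `true` and the branch vertices `b j` colour `false`. -/
structure IsColored {G : SimpleGraph V} (M : ColoredMatching G) (L : K33Frame V) : Prop where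
  color_a : ∀ i, M.color (L.a i) = true
  color_b : ∀ j, M.color (L.b j) = false

section Symmetry

variable {G : SimpleGraph V} {M : ColoredMatching G} (L : K33Frame V) (σ τ : Equiv.Perm (Fin 3))

@[simp] lemma relabel_path (i j : Fin 3) :
    (L.relabel σ τ).path i j = L.path (σ i) (τ j) := rfl

@[simp] lemma relabel_rest : (L.relabel σ τ).rest = L.rest := rfl

@[simp] lemma relabel_verts : (L.relabel σ τ).verts = L.verts := by
  have hτ (i : Fin 3) := Equiv.sum_comp τ fun j => (L.inner i j : Multiset V)
  simp only [verts, relabel, hτ]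
  rw [Equiv.sum_comp σ fun i => ({L.a i} : Multiset V),
    Equiv.sum_comp τ fun j => ({L.b j} : Multiset V),
    Equiv.sum_comp σ fun i => ∑ j, (L.inner i j : Multiset V)]

@[simp] lemma relabel_edges : (L.relabel σ τ).edges = L.edges := by
  have hτ (i : Fin 3) := Equiv.sum_comp τ fun j => pathEdges (L.path i j)
  simp only [edges, relabel_path, relabel_rest, hτ]
  rw [Equiv.sum_comp σ fun i => ∑ j, pathEdges (L.path i j)]

@[simp] lemma swap_path (i j : Fin 3) : L.swap.path i j = (L.path j i).reverse := by
  simp [path, swap]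

@[simp] lemma swap_swap : L.swap.swap = L := by simp [swap]

@[simp] lemma swap_rest : L.swap.rest = L.rest := rfl

@[simp] lemma swap_verts : L.swap.verts = L.verts := by
  simp only [verts, swap, Multiset.coe_reverse]
  rw [Finset.sum_comm, add_comm (∑ i, ({L.b i} : Multiset V))]

@[simp] lemma swap_edges : L.swap.edges = L.edges := by
  simp only [edges, swap_path, pathEdges_reverse, swap_rest]
  rw [Finset.sum_comm]

variable {L}

lemma IsSpanning.relabel (h : L.IsSpanning G) : (L.relabel σ τ).IsSpanning G where
  nodup := by simpa using h.nodup
  mem_verts := by simpa using h.mem_verts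
  even_inner i j := h.even_inner _ _
  mem_edgeSet := by simpa using h.mem_edgeSet

lemma IsSpanning.swap (h : L.IsSpanning G) : L.swap.IsSpanning G where
  nodup := by simpa using h.nodup
  mem_verts := by simpa using h.mem_verts
  even_inner i j := by simpa [K33Frame.swap] using h.even_inner j i
  mem_edgeSet := by simpa using h.mem_edgeSet

lemma IsColored.relabel (h : L.IsColored M) : (L.relabel σ τ).IsColored M :=
  ⟨fun _ => h.color_a _, fun _ => h.color_b _⟩

lemma IsColored.swap (h : L.IsColored M) : L.swap.IsColored M.swap :=
  ⟨fun i => by simp [K33Frame.swap, h.color_b], fun i => by simp [K33Frame.swap, h.color_a]⟩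

end Symmetry

section Disjointness

/-- Indices for the pieces whose disjoint union is the vertex set of a frame: the branch vertices
of either side, the path interiors, and the vertices of the rest. -/
abbrev PartIndex := Fin 3 ⊕ Fin 3 ⊕ (Fin 3 × Fin 3) ⊕ Unit

/-- The pieces whose disjoint union is the vertex set of a frame. -/
def part (L : K33Frame V) : PartIndex → Multiset V
  | .inl i => {L.a i}
  | .inr (.inl j) => {L.b j}
  | .inr (.inr (.inl p)) => L.inner p.1 p.2
  | .inr (.inr (.inr _)) => endpoints L.rest

variable {G : SimpleGraph V} {L : K33Frame V} {i j k l : Fin 3} {v : V}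

lemma verts_eq_sum_part (L : K33Frame V) : L.verts = ∑ t, L.part t := by
  simp [verts, part, Fintype.sum_sum_type, Fintype.sum_prod_type, add_assoc]

lemma a_mem_part : L.a i ∈ L.part (.inl i) := by simp [part]

lemma b_mem_part : L.b j ∈ L.part (.inr (.inl j)) := by simp [part]

lemma mem_part_of_mem_inner (h : v ∈ L.inner i j) : v ∈ L.part (.inr (.inr (.inl (i, j)))) := by
  simpa [part] using h

lemma mem_part_of_mem_rest (h : v ∈ endpoints L.rest) :
    v ∈ L.part (.inr (.inr (.inr ()))) := h

lemma mem_path : v ∈ L.path i j ↔ v = L.a i ∨ v ∈ L.inner i j ∨ v = L.b j := by simp [path]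

lemma mem_edges {e : Sym2 V} :
    e ∈ L.edges ↔ (∃ i j, e ∈ pathEdges (L.path i j)) ∨ e ∈ L.rest := by
  simp [edges, Multiset.mem_sum]

lemma path_subset_edges {e : Sym2 V} (he : e ∈ pathEdges (L.path i j)) : e ∈ L.edges :=
  mem_edges.2 (Or.inl ⟨i, j, he⟩)

lemma mem_verts_iff : v ∈ L.verts ↔
    (∃ i, v = L.a i) ∨ (∃ j, v = L.b j) ∨ (∃ i j, v ∈ L.inner i j) ∨ v ∈ endpoints L.rest := by
  simp [verts, Multiset.mem_sum, or_assoc]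

namespace IsSpanning

variable (h : L.IsSpanning G)
include h

lemma part_unique {s t : PartIndex} (hs : v ∈ L.part s) (ht : v ∈ L.part t) : s = t := by
  classical
  by_contra hne
  have hpair : ∑ x ∈ {s, t}, (L.part x).count v ≤ ∑ x, (L.part x).count v :=
    Finset.sum_le_sum_of_subset (Finset.subset_univ _)
  have hcount := Multiset.nodup_iff_count_le_one.1 h.nodup v
  rw [verts_eq_sum_part, Multiset.count_sum'] at hcount
  rw [Finset.sum_pair hne] at hpair
  have hs' := Multiset.one_le_count_iff_mem.2 hs
  have ht' := Multiset.one_le_count_iff_mem.2 ht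
  omega

lemma part_nodup (t : PartIndex) : (L.part t).Nodup := by
  refine Multiset.nodup_of_le ?_ h.nodup
  rw [verts_eq_sum_part]
  exact Finset.single_le_sum (fun _ _ => Multiset.zero_le _) (Finset.mem_univ t)

lemma a_injective : Function.Injective L.a := fun i j hij =>
  Sum.inl_injective (h.part_unique a_mem_part (by rw [hij]; exact a_mem_part))

lemma b_injective : Function.Injective L.b := fun i j hij =>
  Sum.inl_injective (Sum.inr_injective
    (h.part_unique b_mem_part (by rw [hij]; exact b_mem_part)))

lemma a_ne_b : L.a i ≠ L.b j := fun hij =>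
  Sum.inl_ne_inr (h.part_unique a_mem_part (by rw [hij]; exact b_mem_part))

lemma a_notMem_inner : L.a i ∉ L.inner j k := fun hi => by
  simpa using h.part_unique a_mem_part (mem_part_of_mem_inner hi)

lemma b_notMem_inner : L.b i ∉ L.inner j k := fun hi => by
  simpa using h.part_unique b_mem_part (mem_part_of_mem_inner hi)

lemma inner_unique (hv : v ∈ L.inner i j) (hv' : v ∈ L.inner k l) : i = k ∧ j = l := by
  simpa using h.part_unique (mem_part_of_mem_inner hv) (mem_part_of_mem_inner hv')

lemma inner_nodup (i j : Fin 3) : (L.inner i j).Nodup := by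
  simpa [part] using h.part_nodup (.inr (.inr (.inl (i, j))))

lemma rest_nodup : (endpoints L.rest).Nodup := h.part_nodup (.inr (.inr (.inr ())))

lemma path_nodup (i j : Fin 3) : (L.path i j).Nodup := by
  rw [path, List.nodup_cons, List.nodup_append]
  refine ⟨?_, h.inner_nodup i j, List.nodup_singleton _, ?_⟩
  · simp [h.a_notMem_inner, h.a_ne_b]
  · intro x hx y hy hxy
    rw [hxy, List.mem_singleton.1 hy] at hx
    exact h.b_notMem_inner hx

lemma notMem_rest_of_mem_path (hv : v ∈ L.path i j) : v ∉ endpoints L.rest := by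
  intro hr
  rcases mem_path.1 hv with rfl | hv | rfl
  · simpa using h.part_unique a_mem_part (mem_part_of_mem_rest hr)
  · simpa using h.part_unique (mem_part_of_mem_inner hv) (mem_part_of_mem_rest hr)
  · simpa using h.part_unique b_mem_part (mem_part_of_mem_rest hr)

lemma eq_of_mem_inner_of_mem_path (hv : v ∈ L.inner i j) (hv' : v ∈ L.path k l) :
    i = k ∧ j = l := by
  rcases mem_path.1 hv' with rfl | hv' | rfl
  · exact (h.a_notMem_inner hv).elim
  · exact h.inner_unique hv hv'
  · exact (h.b_notMem_inner hv).elim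

lemma eq_of_a_mem_path (hi : L.a i ∈ L.path k l) : i = k := by
  rcases mem_path.1 hi with hi | hi | hi
  · exact h.a_injective hi
  · exact (h.a_notMem_inner hi).elim
  · exact (h.a_ne_b hi).elim

lemma eq_of_b_mem_path (hj : L.b j ∈ L.path k l) : j = l := by
  rcases mem_path.1 hj with hj | hj | hj
  · exact (h.a_ne_b hj.symm).elim
  · exact (h.b_notMem_inner hj).elim
  · exact h.b_injective hj

lemma path_adj (i j : Fin 3) : ∀ e ∈ pathEdges (L.path i j), e ∈ G.edgeSet :=
  fun _ he => h.mem_edgeSet _ (path_subset_edges he)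

end IsSpanning

end Disjointness

end K33Frame

open scoped Classical in
/-- The number of edges of `N`, with multiplicity, that are not in the matching `M`. Frames are
chosen to minimise it. -/
noncomputable def unmatchedCount {G : SimpleGraph V} (M : ColoredMatching G)
    (N : Multiset (Sym2 V)) : ℕ := N.countP (· ∉ M.edgeSet)

/-- `L` has as few edges outside `M` as any spanning frame. -/
structure IsOptimal {G : SimpleGraph V} (M : ColoredMatching G) (L : K33Frame V) : Prop where
  isSpanning : L.IsSpanning G
  le : ∀ L' : K33Frame V, L'.IsSpanning G →
    unmatchedCount M L.edges ≤ unmatchedCount M L'.edges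

/-- The path `u R v` alternates between edges of `M` and edges of `L.rest`, starting and ending
with edges of `M`, and uses no edge of `M` that is an edge of `L`. The edges of `L.rest` off the
path are collected in `N`. -/
structure IsPartialEar {G : SimpleGraph V} (M : ColoredMatching G) (L : K33Frame V) (u : V)
    (R : List V) (v : V) (N : Multiset (Sym2 V)) : Prop where
  color_left : M.color u = true
  color_right : M.color v = false
  left_notMem : u ∉ R
  right_notMem : v ∉ R
  even : Even R.length
  rest_eq : L.rest = pairEdges R + N
  matched : ∀ e ∈ pairEdges (u :: (R ++ [v])), e ∈ M.edgeSet
  new : ∀ e ∈ pairEdges (u :: (R ++ [v])), e ∉ L.edges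

/-- The path `u R v` is an ear of `L`: a partial ear whose ends lie on the bisubdivision. -/
structure IsEar {G : SimpleGraph V} (M : ColoredMatching G) (L : K33Frame V) (u : V) (R : List V)
    (v : V) (N : Multiset (Sym2 V)) : Prop extends IsPartialEar M L u R v N where
  left_notMem_rest : u ∉ endpoints L.rest
  right_notMem_rest : v ∉ endpoints L.rest

/-- `L'` has the same vertices as `L`, and its edges arise by inserting `P` and deleting `D`. -/
structure IsExchange (L L' : K33Frame V) (P D : Multiset (Sym2 V)) : Prop where
  verts_eq : L'.verts = L.verts
  edges_add : L'.edges + D = L.edges + P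
  even_inner : ∀ i j, Even (L'.inner i j).length

section Ears

variable {G : SimpleGraph V} {M : ColoredMatching G} {L L' : K33Frame V} {u v : V} {R : List V}
  {N P D : Multiset (Sym2 V)}

lemma unmatchedCount_add (A B : Multiset (Sym2 V)) :
    unmatchedCount M (A + B) = unmatchedCount M A + unmatchedCount M B := by
  simp [unmatchedCount]

lemma unmatchedCount_eq_zero {A : Multiset (Sym2 V)} :
    unmatchedCount M A = 0 ↔ ∀ e ∈ A, e ∈ M.edgeSet := by
  simp [unmatchedCount, Multiset.countP_eq_zero]

lemma exists_isOptimal (M : ColoredMatching G) (h : L.IsSpanning G) : ∃ L', IsOptimal M L' := by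
  obtain ⟨L', hL', hmin⟩ := exists_minimalFor_of_wellFoundedLT
    (fun L : K33Frame V => L.IsSpanning G) (fun L => unmatchedCount M L.edges) ⟨L, h⟩
  exact ⟨L', hL', fun L'' h'' => (le_total _ _).elim id (hmin h'')⟩

lemma IsOptimal.relabel (h : IsOptimal M L) (σ τ : Equiv.Perm (Fin 3)) :
    IsOptimal M (L.relabel σ τ) :=
  ⟨h.isSpanning.relabel σ τ, by simpa using h.le⟩

lemma IsOptimal.swap (h : IsOptimal M L) : IsOptimal M.swap L.swap :=
  ⟨h.isSpanning.swap, by rw [L.swap_edges]; exact h.le⟩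

lemma pairEdges_ear_reverse (hR : Even R.length) :
    pairEdges (v :: (R.reverse ++ [u])) = pairEdges (u :: (R ++ [v])) := by
  have hrev : v :: (R.reverse ++ [u]) = (u :: (R ++ [v])).reverse := by simp
  rw [hrev, pairEdges_reverse (by simpa [parity_simps] using hR)]

lemma exists_mem_pairEdges_cons {l : List V} (hl : l ≠ []) : ∃ y, s(u, y) ∈ pairEdges (u :: l) := by
  obtain ⟨y, l, rfl⟩ := List.exists_cons_of_ne_nil hl
  exact ⟨y, by simp⟩

namespace IsPartialEar

lemma swap (h : IsPartialEar M L u R v N) : IsPartialEar M.swap L.swap v R.reverse u N where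
  color_left := by simp [h.color_right]
  color_right := by simp [h.color_left]
  left_notMem := by simpa using h.right_notMem
  right_notMem := by simpa using h.left_notMem
  even := by simpa using h.even
  rest_eq := by simpa [pairEdges_reverse h.even] using h.rest_eq
  matched := by simpa [pairEdges_ear_reverse h.even] using h.matched
  new := by simpa [pairEdges_ear_reverse h.even] using h.new

lemma color_ne (h : IsPartialEar M L u R v N) : M.color u ≠ M.color v := by
  simp [h.color_left, h.color_right]

lemma left_edge_mem (h : IsPartialEar M L u R v N) :
    s(u, M.mate u) ∈ pairEdges (u :: (R ++ [v])) := by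
  obtain ⟨y, hy⟩ := exists_mem_pairEdges_cons (u := u) (l := R ++ [v]) (by simp)
  rwa [ColoredMatching.mk_mem_edgeSet.1 (h.matched _ hy)] at hy

lemma right_edge_mem (h : IsPartialEar M L u R v N) :
    s(v, M.mate v) ∈ pairEdges (u :: (R ++ [v])) := by
  rw [← pairEdges_ear_reverse h.even]
  exact h.swap.left_edge_mem

end IsPartialEar

lemma IsEar.swap (h : IsEar M L u R v N) : IsEar M.swap L.swap v R.reverse u N :=
  ⟨h.toIsPartialEar.swap, h.right_notMem_rest, h.left_notMem_rest⟩

namespace IsExchange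

lemma isSpanning (h : IsExchange L L' P D) (hL : L.IsSpanning G)
    (hP : ∀ e ∈ P, e ∈ M.edgeSet) : L'.IsSpanning G where
  nodup := h.verts_eq ▸ hL.nodup
  mem_verts := h.verts_eq ▸ hL.mem_verts
  even_inner := h.even_inner
  mem_edgeSet e he := by
    have he' : e ∈ L.edges + P := h.edges_add ▸ Multiset.mem_add.2 (Or.inl he)
    exact (Multiset.mem_add.1 he').elim (hL.mem_edgeSet e) fun he =>
      ColoredMatching.edgeSet_subset (hP e he)

lemma isOptimal (h : IsExchange L L' P D) (hL : IsOptimal M L)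
    (hP : ∀ e ∈ P, e ∈ M.edgeSet) : IsOptimal M L' ∧ ∀ e ∈ D, e ∈ M.edgeSet := by
  have hspan := h.isSpanning hL.isSpanning hP
  have hle := hL.le L' hspan
  have hcost := congrArg (unmatchedCount M) h.edges_add
  rw [unmatchedCount_add, unmatchedCount_add, unmatchedCount_eq_zero.2 hP] at hcost
  refine ⟨⟨hspan, fun L'' h'' => ?_⟩, unmatchedCount_eq_zero.1 (by omega)⟩
  have := hL.le L'' h''
  omega

lemma mk_notMem_of_isEar (h : IsExchange L L' (pairEdges (u :: (R ++ [v]))) D)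
    (hL : IsOptimal M L) (hE : IsEar M L u R v N) (hD : ∀ e ∈ D, e ∈ L.edges) {x y : V}
    (hx : x = u ∨ x = v) : s(x, y) ∉ D := by
  intro hxy
  obtain rfl := ColoredMatching.mk_mem_edgeSet.1 ((h.isOptimal hL hE.matched).2 _ hxy)
  refine hE.new _ ?_ (hD _ hxy)
  rcases hx with rfl | rfl
  · exact hE.left_edge_mem
  · exact hE.right_edge_mem

end IsExchange

end Ears

section PathSurgery

lemma pathEdges_split_interior (x y v : V) (p q : List V) :
    pathEdges (x :: (p ++ v :: q ++ [y])) =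
      pathEdges (x :: (p ++ [v])) + pathEdges (v :: (q ++ [y])) := by
  simpa using pathEdges_append_cons (x :: p) (q ++ [y]) v

lemma pathEdges_extend_right (x y v : V) (l w : List V) :
    pathEdges (x :: (l ++ y :: w.reverse ++ [v])) =
      pathEdges (x :: (l ++ [y])) + pathEdges (v :: (w ++ [y])) := by
  rw [← pathEdges_reverse (v :: (w ++ [y])), pathEdges_split_interior]
  simp

lemma pathEdges_extend_left (x y u : V) (l p : List V) :
    pathEdges (u :: (p.reverse ++ x :: l ++ [y])) =
      pathEdges (x :: (p ++ [u])) + pathEdges (x :: (l ++ [y])) := by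
  rw [← pathEdges_reverse (x :: (p ++ [u])), pathEdges_split_interior]
  simp

lemma pathEdges_split_middle (p q S : List V) (x y : V) :
    pathEdges (p ++ x :: (S ++ y :: q)) =
      pathEdges (p ++ [x]) + pathEdges (x :: (S ++ [y])) + pathEdges (y :: q) := by
  rw [pathEdges_append_cons, ← List.cons_append, pathEdges_append_cons (x :: S), add_assoc,
    List.cons_append]

lemma exists_path_replace_segment {a b x y : V} {l p S q : List V}
    (h : a :: (l ++ [b]) = p ++ x :: (S ++ y :: q)) (R : List V) :
    ∃ l', a :: (l' ++ [b]) = p ++ x :: (R ++ y :: q) ∧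
      (l' : Multiset V) + S = (l : Multiset V) + R := by
  obtain ⟨t, z, ht⟩ : ∃ t z, y :: q = t ++ [z] :=
    ⟨_, _, (List.dropLast_append_getLast (List.cons_ne_nil y q)).symm⟩
  have hz : (a :: l) ++ [b] = (p ++ x :: (S ++ t)) ++ [z] := by simpa [ht] using h
  obtain rfl : b = z := by simpa using List.append_inj_right' hz rfl
  have hl : a :: l = p ++ x :: (S ++ t) := List.append_cancel_right hz
  rw [ht]
  cases p with
  | nil =>
    obtain ⟨rfl, rfl⟩ : a = x ∧ l = S ++ t := by simpa using hl
    refine ⟨R ++ t, by simp, ?_⟩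
    simp only [← Multiset.coe_add]
    abel
  | cons z p =>
    obtain ⟨rfl, rfl⟩ : a = z ∧ l = p ++ x :: (S ++ t) := by simpa using hl
    refine ⟨p ++ x :: (R ++ t), by simp, ?_⟩
    simp only [← Multiset.coe_add, ← Multiset.cons_coe, ← Multiset.singleton_add]
    abel

lemma exists_path_replace_tail {a u : V} {l p S : List V} (h : a :: l = p ++ u :: S)
    (R : List V) :
    ∃ l', a :: l' = p ++ u :: R ∧ (l' : Multiset V) + S = (l : Multiset V) + R := by
  obtain ⟨l', hl', hverts⟩ := exists_path_replace_segment (b := a) (q := [])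
    (show a :: (l ++ [a]) = p ++ u :: (S ++ a :: []) by rw [← List.cons_append, h]; simp) R
  refine ⟨l', List.append_cancel_right (bs := [a]) ?_, hverts⟩
  simpa using hl'

end PathSurgery

section Exchanges

variable {L : K33Frame V} {u v x y : V} {R S p q r w : List V} {N : Multiset (Sym2 V)}

lemma even_length_replace {l l' : List V} (h : (l' : Multiset V) + S = (l : Multiset V) + R)
    (hl : Even l.length) (hR : Even R.length) (hS : Even S.length) : Even l'.length := by
  have hcard := congrArg Multiset.card h
  simp only [Multiset.card_add, Multiset.coe_card] at hcard
  grind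

lemma exists_reroute (hL : ∀ i j, Even (L.inner i j).length) (hR : Even R.length)
    (hN : L.rest = pairEdges R + N) (hS : Even S.length)
    (hpath : L.path 0 0 = p ++ x :: (S ++ y :: q)) :
    ∃ L', IsExchange L L' (pairEdges (x :: (R ++ [y]))) (pairEdges (x :: (S ++ [y]))) := by
  classical
  obtain ⟨l, hl, hverts⟩ := exists_path_replace_segment hpath R
  have hlen := even_length_replace hverts (hL 0 0) hR hS
  have hedges : pathEdges (L.a 0 :: (l ++ [L.b 0])) + pairEdges (x :: (S ++ [y])) + pairEdges S =
      pathEdges (L.path 0 0) + pairEdges (x :: (R ++ [y])) + pairEdges R := by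
    rw [hl, hpath, pathEdges_split_middle, pathEdges_split_middle, pathEdges_eq_add hS,
      pathEdges_eq_add hR]
    abel
  refine ⟨⟨L.a, L.b, ![![l, L.inner 0 1, L.inner 0 2], L.inner 1, L.inner 2], N + pairEdges S⟩,
    ?_, ?_, ?_⟩
  · simp only [K33Frame.verts, Fin.sum_univ_three, hN, endpoints_add, endpoints_pairEdges hS,
      endpoints_pairEdges hR, Matrix.cons_val]
    grind
  · simp only [K33Frame.edges, Fin.sum_univ_three, hN, K33Frame.path, Matrix.cons_val] at hedges ⊢
    grind
  · intro i j
    fin_cases i <;> fin_cases j <;> first | exact hlen | exact hL _ _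

lemma exists_reroute_to_path (hL : ∀ i j, Even (L.inner i j).length) (hR : Even R.length)
    (hN : L.rest = pairEdges R + N) (hS : Even S.length) (hr : Even r.length)
    (hu : L.a 0 :: L.inner 0 0 = p ++ u :: S) (hv : L.inner 1 0 = r ++ v :: q) :
    ∃ L', IsExchange L L' (pairEdges (u :: (R ++ [v]))) (pairEdges (u :: (S ++ [L.b 0]))) := by
  classical
  obtain ⟨l, hl, hverts⟩ := exists_path_replace_tail hu R
  have hlen := even_length_replace hverts (hL 0 0) hR hS
  have hlen' : Even (L.inner 2 0 ++ L.b 0 :: q.reverse).length := by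
    have := hL 1 0
    have := hL 2 0
    grind
  have hedges : pathEdges (L.a 0 :: (l ++ [v])) + pairEdges (u :: (S ++ [L.b 0])) + pairEdges S =
      pathEdges (L.path 0 0) + pairEdges (u :: (R ++ [v])) + pairEdges R := by
    have hnew : L.a 0 :: (l ++ [v]) = p ++ u :: (R ++ [v]) := by
      rw [← List.cons_append, hl, List.append_assoc, List.cons_append]
    have hold : L.path 0 0 = p ++ u :: (S ++ [L.b 0]) := by
      rw [K33Frame.path, ← List.cons_append, hu, List.append_assoc, List.cons_append]
    rw [hnew, hold, pathEdges_append_cons p, pathEdges_append_cons p (S ++ _),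
      pathEdges_eq_add hS, pathEdges_eq_add hR]
    abel
  refine ⟨⟨L.a, ![v, L.b 1, L.b 2], ![![l, L.inner 0 1, L.inner 0 2],
    ![r, L.inner 1 1, L.inner 1 2],
    ![L.inner 2 0 ++ L.b 0 :: q.reverse, L.inner 2 1, L.inner 2 2]], N + pairEdges S⟩, ?_, ?_, ?_⟩
  · simp only [K33Frame.verts, Fin.sum_univ_three, hN, endpoints_add, endpoints_pairEdges hS,
      endpoints_pairEdges hR, Matrix.cons_val, hv, ← Multiset.coe_add, ← Multiset.cons_coe,
      Multiset.coe_reverse, ← Multiset.singleton_add]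
    grind
  · simp only [K33Frame.edges, Fin.sum_univ_three, hN, K33Frame.path, Matrix.cons_val,
      hv] at hedges ⊢
    rw [pathEdges_extend_right, pathEdges_split_interior]
    grind
  · intro i j
    fin_cases i <;> fin_cases j <;> first | exact hlen | exact hr | exact hlen' | exact hL _ _

/-- For `u` on the path from `a 0` to `b 1` and `v` on the path from `b 0` to `a 1`, the frame in
which an ear from `u` to `v` replaces the path from `a 0` to `b 0`: the branch vertices `a 0` and
`b 0` move to `u` and `v`. The lists `p`, `q` and `r`, `w` are the pieces into which `u` and `v`
cut their paths. -/
def K33Frame.switch (L : K33Frame V) (u : V) (R : List V) (v : V) (p q r w : List V)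
    (N : Multiset (Sym2 V)) : K33Frame V where
  a := ![u, L.a 1, L.a 2]
  b := ![v, L.b 1, L.b 2]
  inner := ![![R, q, p.reverse ++ L.a 0 :: L.inner 0 2], ![r, L.inner 1 1, L.inner 1 2],
    ![L.inner 2 0 ++ L.b 0 :: w.reverse, L.inner 2 1, L.inner 2 2]]
  rest := N + pairEdges (L.inner 0 0)

lemma isExchange_switch (hL : ∀ i j, Even (L.inner i j).length) (hR : Even R.length)
    (hN : L.rest = pairEdges R + N) (hq : Even q.length) (hr : Even r.length)
    (hu : L.inner 0 1 = p ++ u :: q) (hv : L.inner 1 0 = r ++ v :: w) :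
    IsExchange L (L.switch u R v p q r w N) (pairEdges (u :: (R ++ [v])))
      (pairEdges (L.path 0 0)) := by
  classical
  refine ⟨?_, ?_, ?_⟩
  · simp only [K33Frame.switch, K33Frame.verts, Fin.sum_univ_three, hN, endpoints_add,
      endpoints_pairEdges hR, endpoints_pairEdges (hL 0 0), Matrix.cons_val, hu, hv,
      ← Multiset.coe_add, ← Multiset.cons_coe, Multiset.coe_reverse, ← Multiset.singleton_add]
    abel
  · simp only [K33Frame.switch, K33Frame.edges, Fin.sum_univ_three, hN, K33Frame.path,
      Matrix.cons_val, hu, hv, pathEdges_eq_add hR, pathEdges_eq_add (hL 0 0)]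
    rw [pathEdges_extend_left, pathEdges_extend_right, pathEdges_split_interior,
      pathEdges_split_interior]
    abel
  · have h01 := hL 0 1
    have h02 := hL 0 2
    have h10 := hL 1 0
    have h20 := hL 2 0
    have ha : Even (p.reverse ++ L.a 0 :: L.inner 0 2).length := by grind
    have hb : Even (L.inner 2 0 ++ L.b 0 :: w.reverse).length := by grind
    intro i j
    fin_cases i <;> fin_cases j <;>
      first | exact ha | exact hR | exact hr | exact hq | exact hb | exact hL _ _

end Exchanges

section Position

variable {G : SimpleGraph V} {M : ColoredMatching G} {L L' : K33Frame V} {u v x y : V}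
  {R S p q r w : List V} {N : Multiset (Sym2 V)} {i j k l : Fin 3} {e : Sym2 V}

lemma exists_perm_apply_zero (i : Fin 3) : ∃ σ : Equiv.Perm (Fin 3), σ 0 = i :=
  ⟨Equiv.swap 0 i, by simp⟩

lemma exists_perm_apply_zero_one :
    ∀ i k : Fin 3, i ≠ k → ∃ σ : Equiv.Perm (Fin 3), σ 0 = i ∧ σ 1 = k := by
  decide

lemma exists_append_of_mem_of_mem {l : List V} (hx : x ∈ l) (hy : y ∈ l) (hxy : x ≠ y) :
    ∃ p S q, l = p ++ x :: (S ++ y :: q) ∨ l = p ++ y :: (S ++ x :: q) := by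
  obtain ⟨p, q, rfl⟩ := List.append_of_mem hx
  simp only [List.mem_append, List.mem_cons] at hy
  rcases hy with hy | rfl | hy
  · obtain ⟨p, S, rfl⟩ := List.append_of_mem hy
    exact ⟨p, S, q, Or.inr (by simp)⟩
  · exact (hxy rfl).elim
  · obtain ⟨S, q, rfl⟩ := List.append_of_mem hy
    exact ⟨p, S, q, Or.inl (by simp)⟩

lemma mem_edges_of_path_eq (h : L.path i j = p ++ x :: (S ++ y :: q))
    (he : e ∈ pathEdges (x :: (S ++ [y]))) : e ∈ L.edges := by
  refine K33Frame.path_subset_edges (i := i) (j := j) ?_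
  rw [h, pathEdges_split_middle]
  simp [he]

lemma mem_edges_of_mem_pairEdges (h : L.path i j = p ++ x :: (S ++ y :: q))
    (he : e ∈ pairEdges (x :: (S ++ [y]))) : e ∈ L.edges :=
  mem_edges_of_path_eq h (Multiset.mem_of_le (pairEdges_le_pathEdges _) he)

lemma K33Frame.IsSpanning.color_eq_iff_odd (hL : L.IsSpanning G) (M : ColoredMatching G)
    (h : L.path i j = p ++ x :: (S ++ y :: q)) : M.color x = M.color y ↔ Odd S.length :=
  M.color_eq_iff_odd S x y fun _ he => hL.mem_edgeSet _ (mem_edges_of_path_eq h he)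

lemma K33Frame.IsSpanning.color_ne_iff_even (hL : L.IsSpanning G) (M : ColoredMatching G)
    (h : L.path i j = p ++ x :: (S ++ y :: q)) : M.color x ≠ M.color y ↔ Even S.length := by
  rw [ne_eq, hL.color_eq_iff_odd M h, Nat.not_odd_iff_even]

namespace IsEar

lemma relabel (h : IsEar M L u R v N) (σ τ : Equiv.Perm (Fin 3)) :
    IsEar M (L.relabel σ τ) u R v N where
  toIsPartialEar := { h with new := by simpa using h.new }
  left_notMem_rest := h.left_notMem_rest
  right_notMem_rest := h.right_notMem_rest

lemma path_ne (hL : IsOptimal M L) (hE : IsEar M L u R v N) :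
    L.path 0 0 ≠ p ++ u :: (S ++ v :: q) ∧ L.path 0 0 ≠ p ++ v :: (S ++ u :: q) := by
  refine ⟨fun hpath => ?_, fun hpath => ?_⟩
  · have hS := (hL.isSpanning.color_ne_iff_even M hpath).1 hE.color_ne
    obtain ⟨L', h⟩ := exists_reroute hL.isSpanning.even_inner hE.even hE.rest_eq hS hpath
    obtain ⟨y, hy⟩ := exists_mem_pairEdges_cons (u := u) (l := S ++ [v]) (by simp)
    exact h.mk_notMem_of_isEar hL hE (fun _ => mem_edges_of_mem_pairEdges hpath) (Or.inl rfl) hy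
  · have hS := (hL.isSpanning.color_ne_iff_even M hpath).1 hE.color_ne.symm
    obtain ⟨L', h⟩ := exists_reroute hL.isSpanning.even_inner (R := R.reverse)
      (by simpa using hE.even) hE.swap.rest_eq hS hpath
    rw [pairEdges_ear_reverse hE.even] at h
    obtain ⟨y, hy⟩ := exists_mem_pairEdges_cons (u := v) (l := S ++ [u]) (by simp)
    exact h.mk_notMem_of_isEar hL hE (fun _ => mem_edges_of_mem_pairEdges hpath) (Or.inr rfl) hy

lemma notMem_path (hL : IsOptimal M L) (hE : IsEar M L u R v N) (hu : u ∈ L.path i j) :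
    v ∉ L.path i j := by
  intro hv
  obtain ⟨σ, rfl⟩ := exists_perm_apply_zero i
  obtain ⟨τ, rfl⟩ := exists_perm_apply_zero j
  obtain ⟨p, S, q, hpath⟩ := exists_append_of_mem_of_mem hu hv fun h => hE.color_ne (by rw [h])
  have hne := path_ne (p := p) (S := S) (q := q) (hL.relabel σ τ) (hE.relabel σ τ)
  exact hpath.elim hne.1 hne.2

lemma notMem_inner (hL : IsOptimal M L) (hC : L.IsColored M) (hE : IsEar M L u R v N)
    (hu : u ∈ L.a i :: L.inner i j) : v ∉ L.inner k j := by
  intro hv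
  by_cases hik : i = k
  · subst hik
    exact hE.notMem_path hL (i := i) (j := j) (by simp [K33Frame.path] at hu ⊢; tauto)
      (by simp [K33Frame.path, hv])
  obtain ⟨σ, rfl, rfl⟩ := exists_perm_apply_zero_one i k hik
  obtain ⟨τ, rfl⟩ := exists_perm_apply_zero j
  replace hL := hL.relabel σ τ
  replace hC := hC.relabel σ τ
  replace hE := hE.relabel σ τ
  obtain ⟨p, S, hu⟩ : ∃ p S, (L.relabel σ τ).a 0 :: (L.relabel σ τ).inner 0 0 = p ++ u :: S :=
    List.append_of_mem hu
  obtain ⟨r, q, hv⟩ : ∃ r q, (L.relabel σ τ).inner 1 0 = r ++ v :: q := List.append_of_mem hv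
  generalize L.relabel σ τ = L at *
  have hpath : L.path 0 0 = p ++ u :: (S ++ L.b 0 :: []) := by
    rw [K33Frame.path, ← List.cons_append, hu, List.append_assoc, List.cons_append]
  have hpath' : L.path 1 0 = [] ++ L.a 1 :: (r ++ v :: (q ++ [L.b 0])) := by
    simp [K33Frame.path, hv]
  have hS := (hL.isSpanning.color_ne_iff_even M hpath).1 (by simp [hE.color_left, hC.color_b])
  have hr := (hL.isSpanning.color_ne_iff_even M hpath').1 (by simp [hE.color_right, hC.color_a])
  obtain ⟨L', h⟩ := exists_reroute_to_path hL.isSpanning.even_inner hE.even hE.rest_eq hS hr hu hv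
  obtain ⟨y, hy⟩ := exists_mem_pairEdges_cons (u := u) (l := S ++ [L.b 0]) (by simp)
  exact h.mk_notMem_of_isEar hL hE (fun _ => mem_edges_of_mem_pairEdges hpath) (Or.inl rfl) hy

lemma left_eq_or_mem (hL : IsOptimal M L) (hC : L.IsColored M) (hE : IsEar M L u R v N) :
    (∃ i, u = L.a i) ∨ ∃ i j, u ∈ L.inner i j := by
  rcases K33Frame.mem_verts_iff.1 (hL.isSpanning.mem_verts u) with hu | ⟨j, rfl⟩ | hu | hu
  · exact Or.inl hu
  · simpa [hC.color_b] using hE.color_left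
  · exact Or.inr hu
  · exact (hE.left_notMem_rest hu).elim

lemma exists_mem_inner (hL : IsOptimal M L) (hC : L.IsColored M) (hE : IsEar M L u R v N) :
    ∃ i j k l, i ≠ k ∧ j ≠ l ∧ u ∈ L.inner i j ∧ v ∈ L.inner k l := by
  have hv : (∃ l, v = L.b l) ∨ ∃ l k, v ∈ (L.inner k l).reverse :=
    hE.swap.left_eq_or_mem hL.swap hC.swap
  have hcol {i j k} (hu : u ∈ L.a i :: L.inner i j) : v ∉ L.inner k j := hE.notMem_inner hL hC hu
  have hrow {i j l} (hv : v ∈ L.b l :: (L.inner i l).reverse) : u ∉ (L.inner i j).reverse :=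
    hE.swap.notMem_inner hL.swap hC.swap (i := l) (j := i) (k := j) hv
  rcases hE.left_eq_or_mem hL hC with ⟨i, rfl⟩ | ⟨i, j, hu⟩ <;>
    rcases hv with ⟨l, rfl⟩ | ⟨l, k, hv⟩
  · exact (hE.notMem_path hL (i := i) (j := l) (by simp [K33Frame.path])
      (by simp [K33Frame.path])).elim
  · exact (hcol List.mem_cons_self (List.mem_reverse.1 hv)).elim
  · exact (hrow List.mem_cons_self (List.mem_reverse.2 hu)).elim
  · refine ⟨i, j, k, l, ?_, ?_, hu, List.mem_reverse.1 hv⟩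
    · rintro rfl
      exact hrow (List.mem_cons_of_mem _ hv) (List.mem_reverse.2 hu)
    · rintro rfl
      exact hcol (List.mem_cons_of_mem _ hu) (List.mem_reverse.1 hv)

end IsEar

/-- `L'` arises from `L` when the ear from `u` to `v` replaces the path from `a i` to `b l`: the
branch vertex `a i` moves to `u`, and `b l` moves to `v`, which cuts the path from `a k` to `b l`
into `r` and `w`. -/
structure IsSwitch (M : ColoredMatching G) (L L' : K33Frame V) (u : V) (R : List V) (v : V)
    (N : Multiset (Sym2 V)) (i k l : Fin 3) (r w : List V) : Prop extends
    IsExchange L L' (pairEdges (u :: (R ++ [v]))) (pairEdges (L.path i l)) where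
  isColored : L'.IsColored M
  rest_eq : L'.rest = N + pairEdges (L.inner i l)
  inner_eq : L'.inner k l = r
  path_eq : ∀ j, j ≠ l → L'.path k j = L.path k j
  exists_inner_eq : ∃ h, h ≠ k ∧ L'.inner h l = L.inner h l ++ L.b l :: w.reverse

lemma IsSwitch.of_relabel {σ τ : Equiv.Perm (Fin 3)}
    (h : IsSwitch M (L.relabel σ τ) L' u R v N i k l r w) :
    IsSwitch M L (L'.relabel σ.symm τ.symm) u R v N (σ i) (σ k) (τ l) r w where
  verts_eq := by simpa using h.verts_eq
  edges_add := by simpa using h.edges_add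
  even_inner _ _ := h.even_inner _ _
  isColored := h.isColored.relabel _ _
  rest_eq := h.rest_eq
  inner_eq := by simpa [K33Frame.relabel] using h.inner_eq
  path_eq j hj := by
    simpa using h.path_eq (τ.symm j) (by rwa [ne_eq, Equiv.symm_apply_eq])
  exists_inner_eq := by
    obtain ⟨t, ht, hin⟩ := h.exists_inner_eq
    exact ⟨σ t, σ.injective.ne ht, by simpa [K33Frame.relabel] using hin⟩

lemma IsEar.isSwitch_switch (hL : L.IsSpanning G) (hC : L.IsColored M)
    (hE : IsEar M L u R v N) (hu : L.inner 0 1 = p ++ u :: q) (hv : L.inner 1 0 = r ++ v :: w) :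
    IsSwitch M L (L.switch u R v p q r w N) u R v N 0 1 0 r w := by
  have hpath : L.path 0 1 = (L.a 0 :: p) ++ u :: (q ++ L.b 1 :: []) := by
    simp [K33Frame.path, hu]
  have hpath' : L.path 1 0 = [] ++ L.a 1 :: (r ++ v :: (w ++ [L.b 0])) := by
    simp [K33Frame.path, hv]
  have hq := (hL.color_ne_iff_even M hpath).1 (by simp [hE.color_left, hC.color_b])
  have hr := (hL.color_ne_iff_even M hpath').1 (by simp [hE.color_right, hC.color_a])
  refine ⟨isExchange_switch hL.even_inner hE.even hE.rest_eq hq hr hu hv, ⟨?_, ?_⟩, rfl, rfl, ?_,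
    2, by decide, rfl⟩
  · exact Fin.forall_fin_succ.2 ⟨hE.color_left, fun i => by fin_cases i <;> exact hC.color_a _⟩
  · exact Fin.forall_fin_succ.2 ⟨hE.color_right, fun i => by fin_cases i <;> exact hC.color_b _⟩
  · intro j hj
    fin_cases j
    · exact (hj rfl).elim
    · rfl
    · rfl

lemma IsEar.exists_isSwitch (hL : IsOptimal M L) (hC : L.IsColored M) (hE : IsEar M L u R v N)
    (hik : i ≠ k) (hjl : j ≠ l) (hu : u ∈ L.inner i j) (hv : L.inner k l = r ++ v :: w) :
    ∃ L', IsSwitch M L L' u R v N i k l r w := by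
  obtain ⟨p, q, hu⟩ := List.append_of_mem hu
  obtain ⟨σ, rfl, rfl⟩ := exists_perm_apply_zero_one i k hik
  obtain ⟨τ, rfl, rfl⟩ := exists_perm_apply_zero_one l j hjl.symm
  exact ⟨_, ((hE.relabel σ τ).isSwitch_switch (hL.isSpanning.relabel σ τ) (hC.relabel σ τ)
    hu hv).of_relabel⟩

end Position

section EarExistence

variable {G : SimpleGraph V} {M : ColoredMatching G} {L : K33Frame V} {u v w x y : V} {l R : List V}
  {N : Multiset (Sym2 V)} {e f : Sym2 V}

lemma mk_mate_mem_pairEdges (hl : Even l.length) (h : ∀ e ∈ pairEdges l, e ∈ M.edgeSet)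
    (hx : x ∈ l) : s(x, M.mate x) ∈ pairEdges l := by
  obtain ⟨e, he, hxe⟩ := mem_endpoints.1 (by rwa [endpoints_pairEdges hl] : x ∈ endpoints _)
  rwa [← ColoredMatching.eq_of_mem_edgeSet (h e he) hxe]

lemma mate_mem_of_mem (hl : Even l.length) (h : ∀ e ∈ pairEdges l, e ∈ M.edgeSet) (hx : x ∈ l) :
    M.mate x ∈ l :=
  mem_of_mem_pairEdges (mk_mate_mem_pairEdges hl h hx) (Sym2.mem_mk_right _ _)

lemma eq_of_nodup_endpoints (hN : (endpoints N).Nodup) (he : e ∈ N) (hf : f ∈ N)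
    (hxe : x ∈ e) (hxf : x ∈ f) : e = f := by
  by_contra hne
  obtain ⟨N, rfl⟩ := Multiset.exists_cons_of_mem he
  rw [Multiset.mem_cons, or_iff_right (Ne.symm hne)] at hf
  obtain ⟨y, rfl⟩ := Sym2.mem_iff_exists.1 hxe
  rw [endpoints_cons, Multiset.nodup_cons] at hN
  exact hN.1 (Multiset.mem_cons_of_mem (mem_endpoints.2 ⟨f, hf, hxf⟩))

lemma K33Frame.IsSpanning.mem_rest_of_mem_edges (hL : L.IsSpanning G) (he : e ∈ L.edges)
    (hx : x ∈ e) (hxr : x ∈ endpoints L.rest) : e ∈ L.rest := by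
  rcases K33Frame.mem_edges.1 he with ⟨i, j, he⟩ | he
  · exact (hL.notMem_rest_of_mem_path (mem_of_mem_pathEdges he hx) hxr).elim
  · exact he

lemma pairEdges_append_pair (hR : Even R.length) (u v w x : V) :
    pairEdges (u :: (R ++ [v, w] ++ [x])) = pairEdges (u :: (R ++ [v])) + {s(w, x)} := by
  rw [show u :: (R ++ [v, w] ++ [x]) = (u :: (R ++ [v])) ++ [w, x] by simp,
    pairEdges_append (by simpa [parity_simps] using hR)]
  simp

namespace IsPartialEar

lemma mk_notMem (hL : IsOptimal M L) (h : IsPartialEar M L u R v N) : s(v, u) ∉ N := by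
  intro huv
  obtain ⟨N, rfl⟩ := Multiset.exists_cons_of_mem huv
  have hex : IsExchange L ⟨L.a, L.b, L.inner, pairEdges (u :: (R ++ [v])) + N⟩
      (pairEdges (u :: (R ++ [v]))) (s(v, u) ::ₘ pairEdges R) := by
    refine ⟨?_, ?_, hL.isSpanning.even_inner⟩
    · have hlen : Even (u :: (R ++ [v])).length := by simpa [parity_simps] using h.even
      simp only [K33Frame.verts, h.rest_eq, endpoints_add, endpoints_cons,
        endpoints_pairEdges h.even, endpoints_pairEdges hlen, ← Multiset.cons_coe,
        ← Multiset.coe_add, Multiset.coe_nil]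
      simp only [← Multiset.singleton_add]
      abel
    · simp only [K33Frame.edges, h.rest_eq, K33Frame.path, ← Multiset.singleton_add]
      abel
  obtain rfl := ColoredMatching.mk_mem_edgeSet.1
    ((hex.isOptimal hL h.matched).2 s(v, u) (Multiset.mem_cons_self _ _))
  refine h.new _ h.right_edge_mem (K33Frame.mem_edges.2 (Or.inr ?_))
  simp [h.rest_eq]

lemma append (hL : IsOptimal M L) (h : IsPartialEar M L u R v (s(v, w) ::ₘ N)) :
    IsPartialEar M L u (R ++ [v, w]) (M.mate w) N := by
  have hrest : s(v, w) ∈ L.rest := by simp [h.rest_eq]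
  have hadj : G.Adj v w := hL.isSpanning.mem_edgeSet _ (K33Frame.mem_edges.2 (Or.inr hrest))
  have hlen : Even (u :: (R ++ [v])).length := by simpa [parity_simps] using h.even
  have hw : w ∉ u :: (R ++ [v]) := by
    have hnodup := hL.isSpanning.rest_nodup
    rw [h.rest_eq, endpoints_add, endpoints_pairEdges h.even, Multiset.nodup_add] at hnodup
    rw [List.mem_cons, List.mem_append, List.mem_singleton]
    rintro (rfl | hwR | rfl)
    · exact h.mk_notMem hL (Multiset.mem_cons_self _ _)
    · exact Multiset.disjoint_left.1 hnodup.2.2 hwR (by simp)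
    · exact hadj.ne rfl
  have hmate : M.mate w ∉ u :: (R ++ [v]) := fun hmem => hw <| by
    simpa [M.mate_mate] using mate_mem_of_mem hlen h.matched hmem
  have hpairs := pairEdges_append_pair h.even u v w (M.mate w)
  refine ⟨?_, ?_, ?_, ?_, ?_, ?_, ?_, ?_⟩
  · exact h.color_left
  · rw [ColoredMatching.color_mate, ← M.color_of_adj hadj, h.color_right]
  · simp only [List.mem_cons, List.mem_append] at hw
    simpa [h.left_notMem, ne_of_apply_ne M.color h.color_ne] using fun huw => hw (Or.inl huw.symm)
  · simp only [List.mem_cons, List.mem_append, not_or] at hmate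
    simpa [hmate] using (M.adj_mate w).ne'
  · simpa [parity_simps] using h.even
  · simp [h.rest_eq, pairEdges_append h.even, add_assoc]
  · simp only [hpairs, Multiset.mem_add, Multiset.mem_singleton]
    rintro e (he | rfl)
    exacts [h.matched e he, M.mk_mate_mem_edgeSet w]
  · simp only [hpairs, Multiset.mem_add, Multiset.mem_singleton]
    rintro e (he | rfl) heL
    · exact h.new e he heL
    · have hwr : s(w, M.mate w) ∈ L.rest := hL.isSpanning.mem_rest_of_mem_edges heL
        (Sym2.mem_mk_left _ _) (mem_endpoints.2 ⟨_, hrest, Sym2.mem_mk_right _ _⟩)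
      have heq := eq_of_nodup_endpoints hL.isSpanning.rest_nodup hwr hrest
        (Sym2.mem_mk_left w _) (Sym2.mem_mk_right v w)
      rw [Sym2.eq_swap, Sym2.congr_left] at heq
      exact hmate (by simp [heq])

lemma exists_card_lt (hL : IsOptimal M L) (h : IsPartialEar M L u R v N)
    (hv : v ∈ endpoints L.rest) : ∃ R' v' N', N'.card < N.card ∧ IsPartialEar M L u R' v' N' ∧
      pairEdges (u :: (R ++ [v])) ≤ pairEdges (u :: (R' ++ [v'])) := by
  have hvN : v ∈ endpoints N := by
    rw [h.rest_eq, endpoints_add, endpoints_pairEdges h.even, Multiset.mem_add] at hv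
    exact hv.resolve_left h.right_notMem
  obtain ⟨f, hf, hvf⟩ := mem_endpoints.1 hvN
  obtain ⟨w, rfl⟩ := Sym2.mem_iff_exists.1 hvf
  obtain ⟨N, rfl⟩ := Multiset.exists_cons_of_mem hf
  refine ⟨R ++ [v, w], M.mate w, N, by simp, h.append hL, ?_⟩
  rw [pairEdges_append_pair h.even]
  exact Multiset.le_add_right _ _

/-- Prolonging a partial ear at an end off the bisubdivision uses up an edge of `L.rest`. -/
lemma exists_isEar (hL : IsOptimal M L) (h : IsPartialEar M L u R v N) : ∃ u' R' v' N',
    IsEar M L u' R' v' N' ∧ pairEdges (u :: (R ++ [v])) ≤ pairEdges (u' :: (R' ++ [v'])) := by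
  induction hn : N.card using Nat.strong_induction_on generalizing u R v N with | _ n ih
  subst hn
  by_cases hv : v ∈ endpoints L.rest
  · obtain ⟨R', v', N', hcard, h', hle⟩ := h.exists_card_lt hL hv
    obtain ⟨u'', R'', v'', N'', hE, hle'⟩ := ih _ hcard h' rfl
    exact ⟨u'', R'', v'', N'', hE, hle.trans hle'⟩
  by_cases hu : u ∈ endpoints L.rest
  · obtain ⟨R', u', N', hcard, h', hle⟩ := h.swap.exists_card_lt hL.swap hu
    have hrev := h'.swap
    rw [ColoredMatching.swap_swap, K33Frame.swap_swap] at hrev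
    obtain ⟨u'', R'', v'', N'', hE, hle'⟩ := ih _ hcard hrev rfl
    rw [pairEdges_ear_reverse h.even] at hle
    rw [pairEdges_ear_reverse h'.even] at hle'
    exact ⟨u'', R'', v'', N'', hE, hle.trans hle'⟩
  · exact ⟨u, R, v, N, ⟨h, hu, hv⟩, le_rfl⟩

end IsPartialEar

lemma exists_isPartialEar (he : e ∈ M.edgeSet) (heL : e ∉ L.edges) :
    ∃ x y, e = s(x, y) ∧ IsPartialEar M L x [] y L.rest := by
  obtain ⟨x, hx, rfl⟩ : ∃ x, M.color x = true ∧ e = s(x, M.mate x) := by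
    obtain ⟨x, rfl⟩ := he
    cases hx : M.color x with
    | true => exact ⟨x, hx, rfl⟩
    | false => exact ⟨M.mate x, by simp [hx], by rw [M.mate_mate, Sym2.eq_swap]⟩
  refine ⟨x, M.mate x, rfl, hx, by simp [hx], ?_, ?_, ?_, ?_, ?_, ?_⟩ <;> simp_all

lemma IsOptimal.exists_isEar_of_notMem_edges (hL : IsOptimal M L) (he : e ∈ M.edgeSet)
    (heL : e ∉ L.edges) : ∃ u R v N, IsEar M L u R v N ∧ e ∈ pairEdges (u :: (R ++ [v])) := by
  obtain ⟨x, y, rfl, hxy⟩ := exists_isPartialEar he heL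
  obtain ⟨u, R, v, N, hE, hle⟩ := hxy.exists_isEar hL
  exact ⟨u, R, v, N, hE, Multiset.mem_of_le hle (by simp)⟩

lemma IsOptimal.exists_isEar_of_color_eq_false (hL : IsOptimal M L) (hy : M.color y = false)
    (hyr : y ∉ endpoints L.rest) (hyL : s(y, M.mate y) ∉ L.edges) :
    ∃ u R N, IsEar M L u R y N := by
  obtain ⟨u, R, v, N, hE, hmem⟩ :=
    hL.exists_isEar_of_notMem_edges (M.mk_mate_mem_edgeSet y) hyL
  have hyE := mem_of_mem_pairEdges hmem (Sym2.mem_mk_left _ _)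
  rw [List.mem_cons, List.mem_append, List.mem_singleton] at hyE
  rcases hyE with rfl | hyR | rfl
  · simp [hE.color_left] at hy
  · rw [hE.rest_eq, endpoints_add, endpoints_pairEdges hE.even] at hyr
    exact (hyr (Multiset.mem_add.2 (Or.inl hyR))).elim
  · exact ⟨u, R, N, hE⟩

end EarExistence

/-- The matching of a frame that uses, in the path from `a i` to `b j`, the edges covering the two
branch vertices if `j = σ i`, and the complementary edges otherwise. -/
noncomputable def K33Frame.matching (L : K33Frame V) (σ : Equiv.Perm (Fin 3)) :
    Multiset (Sym2 V) :=
  L.rest + ∑ i, ∑ j, if σ i = j then pairEdges (L.path i j) else pairEdges (L.inner i j)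

/-- Some bisubdivision of `K₃,₃`, completed to a spanning frame, has a perfect matching which
contains both `e₁` and `e₂`. -/
def Coverable (G : SimpleGraph V) (e₁ e₂ : Sym2 V) : Prop :=
  ∃ L : K33Frame V, L.IsSpanning G ∧ ∃ σ, e₁ ∈ L.matching σ ∧ e₂ ∈ L.matching σ

section Coverable

variable {G : SimpleGraph V} {L : K33Frame V} {e₁ e₂ : Sym2 V}
  {i j k l : Fin 3}

lemma K33Frame.mem_matching {σ : Equiv.Perm (Fin 3)} {e : Sym2 V} : e ∈ L.matching σ ↔ e ∈ L.rest ∨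
    ∃ i j, (σ i = j ∧ e ∈ pairEdges (L.path i j)) ∨ (σ i ≠ j ∧ e ∈ pairEdges (L.inner i j)) := by
  simp only [matching, Multiset.mem_add, Multiset.mem_sum, Finset.mem_univ, true_and]
  refine or_congr_right (exists_congr fun i => exists_congr fun j => ?_)
  split_ifs with h <;> simp [h]

lemma Coverable.symm (h : Coverable G e₁ e₂) : Coverable G e₂ e₁ := by
  obtain ⟨L, hL, σ, h₁, h₂⟩ := h
  exact ⟨L, hL, σ, h₂, h₁⟩

lemma exists_perm_ne_ne : ∀ i j k l : Fin 3, ∃ σ : Equiv.Perm (Fin 3), σ i ≠ j ∧ σ k ≠ l := by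
  decide

lemma exists_perm_eq_ne :
    ∀ i j k l : Fin 3, (i = k → j ≠ l) → ∃ σ : Equiv.Perm (Fin 3), σ i = j ∧ σ k ≠ l := by
  decide

lemma exists_perm_eq_eq :
    ∀ i j k l : Fin 3, (i = k ↔ j = l) → ∃ σ : Equiv.Perm (Fin 3), σ i = j ∧ σ k = l := by
  decide

namespace K33Frame.IsSpanning

variable (hL : L.IsSpanning G)
include hL

lemma coverable_of_inner_of_inner (h₁ : e₁ ∈ pairEdges (L.inner i j))
    (h₂ : e₂ ∈ pairEdges (L.inner k l)) : Coverable G e₁ e₂ := by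
  obtain ⟨σ, hij, hkl⟩ := exists_perm_ne_ne i j k l
  exact ⟨L, hL, σ, mem_matching.2 (Or.inr ⟨i, j, Or.inr ⟨hij, h₁⟩⟩),
    mem_matching.2 (Or.inr ⟨k, l, Or.inr ⟨hkl, h₂⟩⟩)⟩

lemma coverable_of_path_of_inner (h : i = k → j ≠ l) (h₁ : e₁ ∈ pairEdges (L.path i j))
    (h₂ : e₂ ∈ pairEdges (L.inner k l)) : Coverable G e₁ e₂ := by
  obtain ⟨σ, hij, hkl⟩ := exists_perm_eq_ne i j k l h
  exact ⟨L, hL, σ, mem_matching.2 (Or.inr ⟨i, j, Or.inl ⟨hij, h₁⟩⟩),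
    mem_matching.2 (Or.inr ⟨k, l, Or.inr ⟨hkl, h₂⟩⟩)⟩

lemma coverable_of_path_of_path (h : i = k ↔ j = l) (h₁ : e₁ ∈ pairEdges (L.path i j))
    (h₂ : e₂ ∈ pairEdges (L.path k l)) : Coverable G e₁ e₂ := by
  obtain ⟨σ, hij, hkl⟩ := exists_perm_eq_eq i j k l h
  exact ⟨L, hL, σ, mem_matching.2 (Or.inr ⟨i, j, Or.inl ⟨hij, h₁⟩⟩),
    mem_matching.2 (Or.inr ⟨k, l, Or.inl ⟨hkl, h₂⟩⟩)⟩

lemma mem_rest_or_mem_pairEdges {e : Sym2 V} (he : e ∈ L.edges) :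
    e ∈ L.rest ∨ ∃ i j, e ∈ pairEdges (L.path i j) ∨ e ∈ pairEdges (L.inner i j) := by
  rcases mem_edges.1 he with ⟨i, j, he⟩ | he
  · rw [path, pathEdges_eq_add (hL.even_inner i j), Multiset.mem_add] at he
    exact Or.inr ⟨i, j, he⟩
  · exact Or.inl he

lemma coverable_of_rest (h₁ : e₁ ∈ L.rest) (h₂ : e₂ ∈ L.edges) : Coverable G e₁ e₂ := by
  suffices ∃ σ, e₂ ∈ L.matching σ by
    obtain ⟨σ, h₂⟩ := this
    exact ⟨L, hL, σ, mem_matching.2 (Or.inl h₁), h₂⟩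
  rcases hL.mem_rest_or_mem_pairEdges h₂ with h | ⟨i, j, h | h⟩
  · exact ⟨1, mem_matching.2 (Or.inl h)⟩
  · obtain ⟨σ, hσ, _⟩ := exists_perm_eq_eq i j i j (by simp)
    exact ⟨σ, mem_matching.2 (Or.inr ⟨i, j, Or.inl ⟨hσ, h⟩⟩)⟩
  · obtain ⟨σ, hσ, _⟩ := exists_perm_ne_ne i j i j
    exact ⟨σ, mem_matching.2 (Or.inr ⟨i, j, Or.inr ⟨hσ, h⟩⟩)⟩

end K33Frame.IsSpanning

end Coverable

section Crossing

variable {G : SimpleGraph V} {M : ColoredMatching G} {L : K33Frame V} {e₁ e₂ : Sym2 V}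
  {i j k l : Fin 3} {A B S T p q r w : List V} {s t t' x y z : V}

lemma mem_of_mk_mem_pathEdges (hn : (A ++ x :: (S ++ z :: B)).Nodup) (hy : y ∈ S)
    (h : s(y, t) ∈ pathEdges (A ++ x :: (S ++ z :: B))) : t ∈ x :: (S ++ [z]) := by
  rw [pathEdges_split_middle, Multiset.mem_add, Multiset.mem_add] at h
  rcases h with (h | h) | h
  all_goals have hyl := mem_of_mem_pathEdges h (Sym2.mem_mk_left y t)
  all_goals have htl := mem_of_mem_pathEdges h (Sym2.mem_mk_right y t)
  all_goals grind

lemma ColoredMatching.countP_color_le (M : ColoredMatching G) (T : List V)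
    (h : ∀ e ∈ pathEdges T, e ∈ G.edgeSet) :
    T.countP (M.color ·) ≤ T.countP (! M.color ·) + 1 := by
  induction T using List.twoStepInduction with
  | nil => simp
  | singleton x => exact (List.countP_le_length.trans_eq (by simp)).trans (Nat.le_add_left 1 _)
  | cons_cons x y T ih _ =>
    have hxy : M.color x = !M.color y := M.color_of_adj (h s(x, y) (by simp))
    have ih := ih fun e he => h e (by cases T <;> simp_all)
    cases hy : M.color y <;> simp only [hy, Bool.not_true, Bool.not_false] at hxy <;>
      simp [hxy, hy] <;> omega

lemma ColoredMatching.mate_injective (M : ColoredMatching G) : Function.Injective M.mate :=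
  Function.LeftInverse.injective M.mate_mate

/-- Colours alternate along `T`, so `T` has at most one more vertex of colour `true` than of
colour `false`. -/
lemma ColoredMatching.exists_mate_notMem (M : ColoredMatching G) (hn : T.Nodup)
    (hT : ∀ e ∈ pathEdges T, e ∈ G.edgeSet) (hst : s ≠ t) (hs : s ∈ T) (ht : t ∈ T)
    (hcs : M.color s = true) (hct : M.color t = true) (hms : M.mate s ∉ T) (hmt : M.mate t ∉ T) :
    ∃ y ∈ T, M.color y = false ∧ M.mate y ∉ T := by
  by_contra! hcon
  set F := (T.filter (! M.color ·)).map M.mate with hF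
  have hmem {x} (hx : M.mate x ∉ T) : x ∉ F := by
    rintro hxF
    obtain ⟨y, hy, rfl⟩ := List.mem_map.1 hxF
    rw [M.mate_mate] at hx
    exact hx (List.mem_of_mem_filter hy)
  have hnodup : (s :: t :: F).Nodup := by
    simp only [List.nodup_cons, List.mem_cons, not_or]
    exact ⟨⟨hst, hmem hms⟩, hmem hmt, (hn.filter _).map M.mate_injective⟩
  have hsub : s :: t :: F ⊆ T.filter (M.color ·) := by
    simp only [List.cons_subset, List.mem_filter, hs, hcs, ht, hct, and_self, true_and]
    intro x hx
    obtain ⟨y, hy, rfl⟩ := List.mem_map.1 hx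
    simp only [List.mem_filter, Bool.not_eq_true'] at hy
    simp [hcon y hy.1 hy.2, hy.2]
  have hlen := (hnodup.subperm hsub).length_le
  have hcount := M.countP_color_le T hT
  simp only [List.countP_eq_length_filter] at hcount
  simp only [hF, List.length_cons, List.length_map] at hlen
  omega

lemma K33Frame.exists_inner_eq (h : L.path i k = p ++ y :: q) (hp : p ≠ []) (hq : q ≠ []) :
    ∃ r w, p = L.a i :: r ∧ q = w ++ [L.b k] ∧ L.inner i k = r ++ y :: w := by
  obtain ⟨x, r, rfl⟩ := List.exists_cons_of_ne_nil hp
  obtain ⟨w, z, rfl⟩ := (List.eq_nil_or_concat' q).resolve_left hq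
  obtain ⟨hx, hin⟩ := List.cons.inj h
  obtain ⟨hin, hz⟩ := List.append_inj' (hin.trans (by simp :
    r ++ y :: (w ++ [z]) = (r ++ y :: w) ++ [z])) rfl
  exact ⟨r, w, by rw [hx], by rw [hz], hin⟩

namespace K33Frame.IsSpanning

lemma mk_notMem_edges (hL : L.IsSpanning G) (h : L.path i k = A ++ x :: (S ++ z :: B))
    (hy : y ∈ S) (ht : t ∉ x :: (S ++ [z])) : s(y, t) ∉ L.edges := by
  have hn := hL.path_nodup i k
  have hyi : y ∈ L.inner i k := by
    obtain ⟨S₁, S₂, rfl⟩ := List.append_of_mem hy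
    obtain ⟨r, w, -, -, hin⟩ := exists_inner_eq (i := i) (k := k) (p := A ++ x :: S₁) (y := y)
      (q := S₂ ++ z :: B) (by rw [h]; simp) (by simp) (by simp)
    simp [hin]
  intro he
  rcases mem_edges.1 he with ⟨i', k', he⟩ | he
  · obtain ⟨rfl, rfl⟩ := hL.eq_of_mem_inner_of_mem_path hyi
      (mem_of_mem_pathEdges he (Sym2.mem_mk_left y t))
    rw [h] at he hn
    exact ht (mem_of_mk_mem_pathEdges hn hy he)
  · exact hL.notMem_rest_of_mem_path (show y ∈ L.path i k by simp [h, hy])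
      (mem_endpoints.2 ⟨_, he, Sym2.mem_mk_left y t⟩)

lemma color_eq_true_iff_even (hL : L.IsSpanning G) (hC : L.IsColored M)
    (h : L.path i k = p ++ x :: q) : M.color x = true ↔ Even p.length := by
  obtain - | ⟨z, p⟩ := p
  · obtain rfl : L.a i = x := by simpa [path] using congrArg List.head? h
    simp [hC.color_a]
  · obtain rfl : L.a i = z := by simpa [path] using congrArg List.head? h
    rw [← hC.color_a i, eq_comm, hL.color_eq_iff_odd M (p := []) h]
    simp [parity_simps]

lemma exists_inner_eq_append (hL : L.IsSpanning G) (hC : L.IsColored M)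
    (h : L.path i k = A ++ y :: (S ++ t :: t' :: q)) (hy : M.color y = false)
    (ht : M.color t = true) : ∃ r w, A = L.a i :: r ∧ L.inner i k = r ++ y :: w ∧
      s(t, t') ∈ pairEdges (w ++ [L.b k]) := by
  have hS := (hL.color_ne_iff_even M h).1 (by simp [hy, ht])
  have hA : A ≠ [] := by
    rintro rfl
    simpa [hy] using hL.color_eq_true_iff_even hC (p := []) h
  obtain ⟨r, w, rfl, hw, hin⟩ := exists_inner_eq h hA (by simp)
  refine ⟨r, w, rfl, hin, ?_⟩
  rw [← hw, pairEdges_append hS]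
  simp

end K33Frame.IsSpanning

lemma IsOptimal.coverable_of_split (hL : IsOptimal M L) (hC : L.IsColored M)
    (hy : M.color y = false) (hyL : s(y, M.mate y) ∉ L.edges) (hv : L.inner i k = r ++ y :: w)
    (h₁ : (∃ j, j ≠ k ∧ e₁ ∈ pairEdges (L.path i j)) ∨ e₁ ∈ pairEdges r)
    (h₂ : e₂ ∈ pairEdges (w ++ [L.b k])) : Coverable G e₁ e₂ := by
  have hyi : y ∈ L.inner i k := by simp [hv]
  have hyr : y ∉ endpoints L.rest :=
    hL.isSpanning.notMem_rest_of_mem_path (K33Frame.mem_path.2 (Or.inr (Or.inl hyi)))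
  obtain ⟨u, R, N, hE⟩ := hL.exists_isEar_of_color_eq_false hy hyr hyL
  obtain ⟨i', j', i₁, k₁, hi, hj, hu, hyi'⟩ := hE.exists_mem_inner hL hC
  obtain ⟨rfl, rfl⟩ := hL.isSpanning.inner_unique hyi hyi'
  obtain ⟨L', h⟩ := hE.exists_isSwitch hL hC hi hj hu hv
  have hL' := (h.toIsExchange.isOptimal hL hE.matched).1.isSpanning
  obtain ⟨m, hm, hinner⟩ := h.exists_inner_eq
  have h₂' : e₂ ∈ pairEdges (L'.inner m k) := by
    have hpath : L.path i k = (L.a i :: r) ++ y :: (w ++ L.b k :: []) := by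
      simp [K33Frame.path, hv]
    have hw : Odd w.length := (hL.isSpanning.color_eq_iff_odd M hpath).1 (by rw [hy, hC.color_b])
    rw [hinner, show L.b k :: w.reverse = (w ++ [L.b k]).reverse by simp,
      pairEdges_append (hL.isSpanning.even_inner m k),
      pairEdges_reverse (by simpa [parity_simps] using hw)]
    exact Multiset.mem_add.2 (Or.inr h₂)
  rcases h₁ with ⟨j, hjk, h₁⟩ | h₁
  · rw [← h.path_eq j hjk] at h₁
    exact hL'.coverable_of_path_of_inner (fun him => (hm him.symm).elim) h₁ h₂'
  · rw [← h.inner_eq] at h₁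
    exact hL'.coverable_of_inner_of_inner h₁ h₂'

lemma K33Frame.IsSpanning.eq_or_of_mem_path_of_mem_path (hL : L.IsSpanning G)
    (h : x ∈ L.path i j) (h' : x ∈ L.path k l) :
    (i = k ∧ j = l) ∨ (i = k ∧ x = L.a i) ∨ (j = l ∧ x = L.b j) := by
  rcases K33Frame.mem_path.1 h with rfl | h | rfl
  · exact Or.inr (Or.inl ⟨hL.eq_of_a_mem_path h', rfl⟩)
  · exact Or.inl (hL.eq_of_mem_inner_of_mem_path h h')
  · exact Or.inr (Or.inr ⟨hL.eq_of_b_mem_path h', rfl⟩)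

end Crossing

section SamePath

variable {G : SimpleGraph V} {M : ColoredMatching G} {L : K33Frame V} {e₁ e₂ : Sym2 V}
  {i j k : Fin 3} {A B c p p' q q' r : List V} {s t t' x x' y : V}

namespace K33Frame.IsSpanning

lemma exists_inner_eq_of_mem_prefix (hL : L.IsSpanning G) (hC : L.IsColored M)
    (h : L.path i k = p ++ t :: t' :: q) (ht : M.color t = true) (hyp : y ∈ p ++ [t])
    (hy : M.color y = false) (hmy : M.mate y ∉ p ++ [t]) : ∃ r w, L.inner i k = r ++ y :: w ∧
      s(t, t') ∈ pairEdges (w ++ [L.b k]) ∧ s(y, M.mate y) ∉ L.edges := by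
  have hyt : y ≠ t := fun hyt => by simp [hyt, ht] at hy
  obtain ⟨A, S, rfl⟩ := List.append_of_mem (show y ∈ p by simpa [hyt] using hyp)
  obtain ⟨r, w, rfl, hin, hmem⟩ :=
    hL.exists_inner_eq_append (i := i) (k := k) hC (A := A) (S := S) (t' := t')
      (q := q) (by simp [h]) hy ht
  refine ⟨r, w, hin, hmem, hL.mk_notMem_edges (A := []) (S := r ++ y :: S) (z := t)
    (B := t' :: q) (by simpa using h) (by simp) (by simpa using hmy)⟩

lemma exists_prefix_eq_cons (h : L.path i k = p ++ t :: q) : ∃ T, p ++ [t] = L.a i :: T := by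
  obtain - | ⟨z, p⟩ := p
  · exact ⟨[], by rw [← (List.cons.inj h).1, List.nil_append]⟩
  · exact ⟨p ++ [t], by rw [(List.cons.inj h).1, List.cons_append]⟩

/-- `ColoredMatching.exists_mate_notMem` for the path from `s` through `a i` to `t`. -/
lemma exists_mate_notMem_prefixes (hL : L.IsSpanning G) (hjk : j ≠ k)
    (hs : L.path i j = p ++ s :: M.mate s :: q) (ht : L.path i k = p' ++ t :: M.mate t :: q')
    (hst : s ≠ t) (hcs : M.color s = true) (hct : M.color t = true) :
    ∃ y, M.color y = false ∧ (y ∈ p ++ [s] ∨ y ∈ p' ++ [t]) ∧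
      M.mate y ∉ p ++ [s] ∧ M.mate y ∉ p' ++ [t] := by
  obtain ⟨T, hT⟩ := exists_prefix_eq_cons hs
  obtain ⟨T', hT'⟩ := exists_prefix_eq_cons ht
  have hn := hL.path_nodup i j
  have hn' := hL.path_nodup i k
  have hmeet {x} (hx : x ∈ L.path i j) (hx' : x ∈ L.path i k) : x = L.a i := by
    simpa [hjk] using hL.eq_or_of_mem_path_of_mem_path hx hx'
  have hadj : ∀ e ∈ pathEdges (T.reverse ++ L.a i :: T'), e ∈ G.edgeSet := by
    intro e he
    rw [pathEdges_append_cons, ← List.reverse_cons, pathEdges_reverse, ← hT, ← hT',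
      Multiset.mem_add] at he
    rcases he with he | he
    · exact hL.path_adj i j e (by
        rw [hs, pathEdges_append_cons]; exact Multiset.mem_add.2 (Or.inl he))
    · exact hL.path_adj i k e (by
        rw [ht, pathEdges_append_cons]; exact Multiset.mem_add.2 (Or.inl he))
  replace hs : L.path i j = L.a i :: T ++ M.mate s :: q := by rw [hs, List.append_cons, hT]
  replace ht : L.path i k = L.a i :: T' ++ M.mate t :: q' := by rw [ht, List.append_cons, hT']
  rw [hs] at hn hmeet
  rw [ht] at hn' hmeet
  rw [hT, hT']
  have hsT : s ∈ L.a i :: T := by simp [← hT]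
  have htT : t ∈ L.a i :: T' := by simp [← hT']
  clear hs ht hT hT'
  simp only [List.cons_append, List.nodup_cons, List.nodup_append, List.mem_append,
    List.mem_cons, not_or] at hn hn' hmeet hsT htT ⊢
  have hnodup : (T.reverse ++ L.a i :: T').Nodup := by
    rw [List.nodup_append]
    refine ⟨List.nodup_reverse.2 hn.2.1, List.nodup_cons.2 ⟨hn'.1.1, hn'.2.1⟩, ?_⟩
    simp only [List.mem_reverse, List.mem_cons]
    grind
  obtain ⟨y, hyT, hy, hmy⟩ := M.exists_mate_notMem hnodup hadj hst (by simp; tauto)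
    (by simp; tauto) hcs hct (by simp; grind) (by simp; grind)
  simp only [List.mem_append, List.mem_reverse, List.mem_cons, not_or] at hyT hmy
  exact ⟨y, hy, by tauto, by tauto, by tauto⟩

end K33Frame.IsSpanning

namespace IsOptimal

lemma coverable_of_path_left (hL : IsOptimal M L) (hC : L.IsColored M) (hjk : j ≠ k)
    (h₁ : e₁ ∈ pairEdges (L.path i j)) (h₂ : e₂ ∈ pairEdges (L.path i k)) (hm₁ : e₁ ∈ M.edgeSet)
    (hm₂ : e₂ ∈ M.edgeSet) (hne : e₁ ≠ e₂) : Coverable G e₁ e₂ := by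
  have hLs := hL.isSpanning
  obtain ⟨p, s, s', q, hs, hp, rfl⟩ := exists_append_of_mem_pairEdges h₁
  obtain ⟨p', t, t', q', ht, hp', rfl⟩ := exists_append_of_mem_pairEdges h₂
  have hcs := (hLs.color_eq_true_iff_even hC hs).2 hp
  have hct := (hLs.color_eq_true_iff_even hC ht).2 hp'
  obtain rfl := ColoredMatching.mk_mem_edgeSet.1 hm₁
  obtain rfl := ColoredMatching.mk_mem_edgeSet.1 hm₂
  obtain ⟨y, hy, hyp | hyp, hmy, hmy'⟩ := hLs.exists_mate_notMem_prefixes hjk hs ht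
    (fun hst => hne (by rw [hst])) hcs hct
  · obtain ⟨r, w, hin, hmem, hyL⟩ := hLs.exists_inner_eq_of_mem_prefix hC hs hcs hyp hy hmy
    exact (hL.coverable_of_split hC hy hyL hin (Or.inl ⟨k, hjk.symm, h₂⟩) hmem).symm
  · obtain ⟨r, w, hin, hmem, hyL⟩ := hLs.exists_inner_eq_of_mem_prefix hC ht hct hyp hy hmy'
    exact hL.coverable_of_split hC hy hyL hin (Or.inl ⟨j, hjk, h₁⟩) hmem

lemma coverable_of_path_right (hL : IsOptimal M L) (hC : L.IsColored M) (hij : i ≠ j)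
    (h₁ : e₁ ∈ pairEdges (L.path i k)) (h₂ : e₂ ∈ pairEdges (L.path j k)) (hm₁ : e₁ ∈ M.edgeSet)
    (hm₂ : e₂ ∈ M.edgeSet) (hne : e₁ ≠ e₂) : Coverable G e₁ e₂ := by
  have heven (i) : Even (L.path i k).length := by
    simpa [K33Frame.path, parity_simps] using hL.isSpanning.even_inner i k
  refine hL.swap.coverable_of_path_left hC.swap (i := k) hij ?_ ?_ hm₁ hm₂ hne <;>
    simpa [pairEdges_reverse (heven _)]

lemma coverable_of_path_eq (hL : IsOptimal M L) (hC : L.IsColored M)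
    (h : L.path i k = A ++ x :: x' :: (B ++ t :: t' :: q)) (hA : Odd A.length)
    (hB : Odd B.length) (hx : s(x, x') ∈ M.edgeSet) (ht : s(t, t') ∈ M.edgeSet) :
    Coverable G s(x, x') s(t, t') := by
  have hLs := hL.isSpanning
  have hn := hLs.path_nodup i k
  have hx' : L.path i k = (A ++ [x]) ++ x' :: (B ++ t :: t' :: q) := by simp [h]
  have hcx : M.color x' = true :=
    (hLs.color_eq_true_iff_even hC hx').2 (by simpa [parity_simps] using hA)
  have hct : M.color t = true := by rw [← hcx, eq_comm, hLs.color_eq_iff_odd M hx']; exact hB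
  rw [Sym2.eq_swap] at hx
  obtain rfl := ColoredMatching.mk_mem_edgeSet.1 hx
  obtain rfl := ColoredMatching.mk_mem_edgeSet.1 ht
  rw [h] at hn
  obtain ⟨y, hyT, hy, hmy⟩ : ∃ y ∈ x' :: (B ++ [t]), M.color y = false ∧
      M.mate y ∉ x' :: (B ++ [t]) :=
    M.exists_mate_notMem (by grind)
      (fun _ he => hLs.mem_edgeSet _ (mem_edges_of_path_eq hx' he)) (by grind)
      List.mem_cons_self (by simp) hcx hct (by grind) (by grind)
  have hyB : y ∈ B := by
    have hyx : y ≠ x' := fun hyx => by simp [hyx, hcx] at hy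
    have hyt : y ≠ t := fun hyt => by simp [hyt, hct] at hy
    simpa [hyx, hyt] using hyT
  have hyL := hLs.mk_notMem_edges hx' hyB hmy
  obtain ⟨B₁, B₂, rfl⟩ := List.append_of_mem hyB
  obtain ⟨r, w, hr, hin, hmem⟩ := hLs.exists_inner_eq_append (i := i) (k := k) hC
    (A := A ++ M.mate x' :: x' :: B₁) (S := B₂) (t' := M.mate t) (q := q) (by simp [h]) hy hct
  refine hL.coverable_of_split hC hy hyL hin (Or.inr ?_) hmem
  obtain ⟨a, A, rfl⟩ := List.exists_cons_of_length_pos hA.pos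
  rw [← (List.cons.inj hr).2, List.append_eq, pairEdges_append (by simpa [parity_simps] using hA)]
  simp

end IsOptimal

lemma exists_eq_cons_cons (hx : s(x, x') ∈ M.edgeSet) (ht : s(t, t') ∈ M.edgeSet)
    (hne : s(t, t') ≠ s(x, x')) (hc : Odd c.length) (h : t :: t' :: q = c ++ x :: x' :: r) :
    ∃ B, Odd B.length ∧ c = t :: t' :: B ∧ q = B ++ x :: x' :: r := by
  match c with
  | [] => simp at hc
  | [_] =>
    obtain ⟨rfl, rfl, -⟩ := by simpa using h
    refine (hne ?_).elim
    rw [Sym2.eq_swap] at ht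
    rw [Sym2.eq_swap, ColoredMatching.mk_mem_edgeSet.1 ht, ColoredMatching.mk_mem_edgeSet.1 hx]
  | _ :: _ :: B =>
    obtain ⟨rfl, rfl, rfl⟩ := by simpa using h
    exact ⟨B, by simpa [parity_simps] using hc, rfl, rfl⟩

namespace IsOptimal

lemma coverable_of_inner_of_path (hL : IsOptimal M L) (hC : L.IsColored M)
    (h₁ : e₁ ∈ pairEdges (L.inner i k)) (h₂ : e₂ ∈ pairEdges (L.path i k))
    (hm₁ : e₁ ∈ M.edgeSet) (hm₂ : e₂ ∈ M.edgeSet) (hne : e₁ ≠ e₂) : Coverable G e₁ e₂ := by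
  obtain ⟨r, x, x', q, hx, hr, rfl⟩ := exists_append_of_mem_pairEdges h₁
  obtain ⟨p, t, t', q', ht, hp, rfl⟩ := exists_append_of_mem_pairEdges h₂
  have hpath : L.path i k = (L.a i :: r) ++ x :: x' :: (q ++ [L.b k]) := by
    simp [K33Frame.path, hx]
  rcases List.append_eq_append_iff.1 (hpath.symm.trans ht) with ⟨c, hc, hc'⟩ | ⟨c, hc, hc'⟩
  · have hodd : Odd c.length := by
      have hlen := congrArg List.length hc
      simp only [List.length_append, List.length_cons] at hlen
      grind
    obtain ⟨B, hB, rfl, hq⟩ := exists_eq_cons_cons hm₂ hm₁ hne hodd hc'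
    exact hL.coverable_of_path_eq hC (hpath.trans (by rw [hq])) (by simpa [parity_simps] using hr)
      hB hm₁ hm₂
  · have hodd : Odd c.length := by
      have hlen := congrArg List.length hc
      simp only [List.length_append, List.length_cons] at hlen
      grind
    obtain ⟨B, hB, rfl, rfl⟩ := exists_eq_cons_cons hm₁ hm₂ hne.symm hodd hc'
    have hq : Even q.length := by
      have hlen := hL.isSpanning.even_inner i k
      simp only [hx, List.length_append, List.length_cons] at hlen
      grind
    rw [Sym2.eq_swap (a := x), Sym2.eq_swap (a := t)] at *
    refine hL.swap.coverable_of_path_eq hC.swap (i := k) (k := i) (A := L.b k :: q.reverse)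
      (B := B.reverse) (q := p.reverse) ?_ (by simpa [parity_simps] using hq) (by simpa) hm₁ hm₂
    simp [ht]

lemma coverable_of_mem_edges (hL : IsOptimal M L) (hC : L.IsColored M) (h₁ : e₁ ∈ L.edges)
    (h₂ : e₂ ∈ L.edges) (hm₁ : e₁ ∈ M.edgeSet) (hm₂ : e₂ ∈ M.edgeSet) (hne : e₁ ≠ e₂) :
    Coverable G e₁ e₂ := by
  have hLs := hL.isSpanning
  rcases hLs.mem_rest_or_mem_pairEdges h₁ with hr₁ | ⟨i, j, hij⟩
  · exact hLs.coverable_of_rest hr₁ h₂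
  rcases hLs.mem_rest_or_mem_pairEdges h₂ with hr₂ | ⟨k, l, hkl⟩
  · exact (hLs.coverable_of_rest hr₂ h₁).symm
  rcases hij with hij | hij <;> rcases hkl with hkl | hkl
  · by_cases hik : i = k <;> by_cases hjl : j = l
    · exact hLs.coverable_of_path_of_path (by simp [hik, hjl]) hij hkl
    · subst hik
      exact hL.coverable_of_path_left hC hjl hij hkl hm₁ hm₂ hne
    · subst hjl
      exact hL.coverable_of_path_right hC hik hij hkl hm₁ hm₂ hne
    · exact hLs.coverable_of_path_of_path (by simp [hik, hjl]) hij hkl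
  · by_cases h : i = k ∧ j = l
    · obtain ⟨rfl, rfl⟩ := h
      exact (hL.coverable_of_inner_of_path hC hkl hij hm₂ hm₁ hne.symm).symm
    · exact hLs.coverable_of_path_of_inner (by tauto) hij hkl
  · by_cases h : i = k ∧ j = l
    · obtain ⟨rfl, rfl⟩ := h
      exact hL.coverable_of_inner_of_path hC hij hkl hm₁ hm₂ hne
    · exact (hLs.coverable_of_path_of_inner (by grind) hkl hij).symm
  · exact hLs.coverable_of_inner_of_inner hij hkl

end IsOptimal

end SamePath

section TwoEars

variable {G : SimpleGraph V} {M : ColoredMatching G} {L L' : K33Frame V} {e e₁ e₂ : Sym2 V}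
  {i j k l : Fin 3} {r w R R' : List V} {u u' v v' x y : V} {N N' : Multiset (Sym2 V)}

lemma mem_iff_mem_of_forall_pathEdges {D : Set V} {l : List V}
    (h : ∀ a b, s(a, b) ∈ pathEdges (x :: l) → a ∈ D → b ∈ D) (hy : y ∈ x :: l) :
    y ∈ D ↔ x ∈ D := by
  induction l generalizing x with
  | nil => rw [List.mem_singleton.1 hy]
  | cons z l ih =>
    have hxz : z ∈ D ↔ x ∈ D := ⟨h z x (by simp), h x z (by simp)⟩
    rcases List.mem_cons.1 hy with rfl | hy
    · rfl
    · exact (ih (fun a b hab => h a b (by simp [hab])) hy).trans hxz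

namespace IsEar

lemma mate_mem (hE : IsEar M L u R v N) (hx : x ∈ u :: (R ++ [v])) :
    M.mate x ∈ u :: (R ++ [v]) :=
  mate_mem_of_mem (by simpa [parity_simps] using hE.even) hE.matched hx

lemma mem_endpoints_rest (hE : IsEar M L u R v N) (hx : x ∈ R) : x ∈ endpoints L.rest := by
  simp [hE.rest_eq, endpoints_pairEdges hE.even, hx]

lemma notMem_of_mem (hL : L.IsSpanning G) (hE : IsEar M L u R v N) (hE' : IsEar M L u' R' v' N')
    (hv : v' ≠ v) (hx : x ∈ u' :: (R' ++ [v'])) : x ∉ u :: (R ++ [v]) := by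
  intro hxE
  have hclosed : ∀ a b, s(a, b) ∈ pathEdges (u' :: (R' ++ [v'])) → a ∈ u :: (R ++ [v]) →
      b ∈ u :: (R ++ [v]) := by
    intro a b hab ha
    rw [pathEdges_eq_add hE'.even, Multiset.mem_add] at hab
    rcases hab with hab | hab
    · rw [ColoredMatching.mk_mem_edgeSet.1 (hE'.matched _ hab)]
      exact hE.mate_mem ha
    have hrest : s(a, b) ∈ L.rest := by simp [hE'.rest_eq, hab]
    have har : a ∈ endpoints L.rest := mem_endpoints.2 ⟨_, hrest, Sym2.mem_mk_left _ _⟩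
    have haR : a ∈ R := by
      have hau : a ≠ u := fun h => hE.left_notMem_rest (h ▸ har)
      have hav : a ≠ v := fun h => hE.right_notMem_rest (h ▸ har)
      simpa [hau, hav] using ha
    rw [← Multiset.mem_coe, ← endpoints_pairEdges hE.even, mem_endpoints] at haR
    obtain ⟨f, hf, haf⟩ := haR
    obtain rfl := eq_of_nodup_endpoints hL.rest_nodup hrest
      (by rw [hE.rest_eq]; exact Multiset.mem_add.2 (Or.inl hf)) (Sym2.mem_mk_left _ _) haf
    simp [mem_of_mem_pairEdges hf (Sym2.mem_mk_right a b)]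
  have hv' : v' ∈ u :: (R ++ [v]) := by
    have hiff {y} (hy : y ∈ u' :: (R' ++ [v'])) :=
      mem_iff_mem_of_forall_pathEdges (D := {x | x ∈ u :: (R ++ [v])}) hclosed hy
    exact (hiff (by simp)).2 ((hiff hx).1 hxE)
  have hv'u : v' ≠ u := fun h => by simpa [← h, hE'.color_right] using hE.color_left
  exact hE'.right_notMem_rest (hE.mem_endpoints_rest (by simpa [hv, hv'u] using hv'))

end IsEar

namespace IsSwitch

lemma mem_edges_of_mem_ear (h : IsSwitch M L L' u R v N i k l r w) (hE : IsEar M L u R v N)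
    (he : e ∈ pairEdges (u :: (R ++ [v]))) : e ∈ L'.edges := by
  have hmem : e ∈ L'.edges + pairEdges (L.path i l) :=
    h.edges_add ▸ Multiset.mem_add.2 (Or.inr he)
  exact (Multiset.mem_add.1 hmem).resolve_right fun he' =>
    hE.new e he (K33Frame.path_subset_edges (Multiset.mem_of_le (pairEdges_le_pathEdges _) he'))

lemma mem_edges (h : IsSwitch M L L' u R v N i k l r w) (he : e ∈ L.edges)
    (hpath : e ∉ pairEdges (L.path i l)) : e ∈ L'.edges := by
  have hmem : e ∈ L'.edges + pairEdges (L.path i l) :=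
    h.edges_add ▸ Multiset.mem_add.2 (Or.inl he)
  exact (Multiset.mem_add.1 hmem).resolve_right hpath

lemma exists_isEar (h : IsSwitch M L L' u' R' v' N' i k l r w) (hL : L.IsSpanning G)
    (hE : IsEar M L u R v N) (hE' : IsEar M L u' R' v' N') (hv : v' ≠ v)
    (hu : u ∉ L.inner i l) (hvl : v ∉ L.inner i l) : ∃ N₁, IsEar M L' u R v N₁ := by
  have hdisj {l l' e} (hl : l ⊆ u :: (R ++ [v])) (hl' : l' ⊆ u' :: (R' ++ [v']))
      (he : e ∈ pairEdges l) : e ∉ pairEdges l' := by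
    induction e with | _ a b
    exact fun he' => hE.notMem_of_mem hL hE' hv
      (hl' (mem_of_mem_pairEdges he' (Sym2.mem_mk_left a b)))
      (hl (mem_of_mem_pairEdges he (Sym2.mem_mk_left a b)))
  have hle : pairEdges R ≤ N' := by
    classical
    rw [Multiset.le_iff_count]
    intro e
    by_cases he : e ∈ pairEdges R
    · have hcount := congrArg (Multiset.count e) (hE.rest_eq.symm.trans hE'.rest_eq)
      have he' : e ∉ pairEdges R' := hdisj (by simp) (by simp) he
      rw [Multiset.count_add, Multiset.count_add, Multiset.count_eq_zero.2 he'] at hcount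
      omega
    · rw [Multiset.count_eq_zero.2 he]
      exact Nat.zero_le _
  obtain ⟨N₁, rfl⟩ := Multiset.le_iff_exists_add.1 hle
  have hrest {x} (hx : x ∉ endpoints L.rest) (hxl : x ∉ L.inner i l) :
      x ∉ endpoints L'.rest := by
    rw [hE'.rest_eq] at hx
    simp only [h.rest_eq, endpoints_add, endpoints_pairEdges (hL.even_inner _ _),
      Multiset.mem_add, Multiset.mem_coe] at hx ⊢
    tauto
  refine ⟨N₁ + pairEdges (L.inner i l), { hE with
    rest_eq := by rw [h.rest_eq, add_assoc], new := fun e he heL => ?_ },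
    hrest hE.left_notMem_rest hu, hrest hE.right_notMem_rest hvl⟩
  have hmem : e ∈ L.edges + pairEdges (u' :: (R' ++ [v'])) :=
    h.edges_add ▸ Multiset.mem_add.2 (Or.inl heL)
  refine (Multiset.mem_add.1 hmem).elim (hE.new e he) fun he' => ?_
  exact hdisj (List.Subset.refl _) (List.Subset.refl _) he he'

end IsSwitch

lemma K33Frame.IsSpanning.eq_of_mem_pairEdges_path (hL : L.IsSpanning G)
    (h : e ∈ pairEdges (L.path i j)) (h' : e ∈ pairEdges (L.path k l)) : i = k ∧ j = l := by
  have hadj := hL.path_adj i j e (Multiset.mem_of_le (pairEdges_le_pathEdges _) h)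
  induction e with | _ x y
  have hmeet {z} (hz : z ∈ s(x, y)) := hL.eq_or_of_mem_path_of_mem_path
    (mem_of_mem_pairEdges h hz) (mem_of_mem_pairEdges h' hz)
  have hx := hmeet (Sym2.mem_mk_left x y)
  have hy := hmeet (Sym2.mem_mk_right x y)
  have hxy : x ≠ y := G.ne_of_adj hadj
  grind

lemma K33Frame.IsSpanning.mate_a_notMem_inner (hL : L.IsSpanning G) (hjl : j ≠ l)
    (hmatched : ∀ e ∈ pairEdges (L.path i l), e ∈ M.edgeSet) : M.mate (L.a i) ∉ L.inner i j := by
  intro h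
  have hmem : M.mate (L.a i) ∈ L.path i l := mate_mem_of_mem
    (by simpa [K33Frame.path, parity_simps] using hL.even_inner i l) hmatched
    (by simp [K33Frame.path])
  exact hjl (hL.eq_of_mem_inner_of_mem_path h hmem).2

lemma IsEar.mate_left_notMem_path (hL : L.IsSpanning G) (hE : IsEar M L u R v N) (hik : i ≠ k)
    (hv : v ∈ L.inner k l) : M.mate u ∉ L.path i j := by
  intro h
  have hear := hE.mate_mem (x := u) (by simp)
  simp only [List.mem_cons, List.mem_append, List.not_mem_nil, or_false] at hear
  rcases hear with hear | hear | hear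
  · exact (M.adj_mate u).ne hear.symm
  · exact hL.notMem_rest_of_mem_path h (hE.mem_endpoints_rest hear)
  · exact hik (hL.eq_of_mem_inner_of_mem_path hv (hear ▸ h)).1.symm

lemma IsEar.exists_inner_eq (hL : L.IsSpanning G) (hC : L.IsColored M) (hE : IsEar M L u R v N)
    (hik : i ≠ k) (hjl : j ≠ l) (hu : u ∈ L.inner i j) (hv : v ∈ L.inner k l)
    (hmatched : ∀ e ∈ pairEdges (L.path i l), e ∈ M.edgeSet) : ∃ r y w,
      L.inner i j = r ++ y :: w ∧ u ∈ w ∧ M.color y = false ∧ s(y, M.mate y) ∉ L.edges := by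
  obtain ⟨p, q, hin⟩ := List.append_of_mem hu
  obtain ⟨t, q', hq⟩ : ∃ t q', q ++ [L.b j] = t :: q' := List.exists_cons_of_ne_nil (by simp)
  have hpath : L.path i j = (L.a i :: p) ++ u :: t :: q' := by
    simp [K33Frame.path, hin, ← hq]
  have hn : (L.a i :: (p ++ [u])).Nodup := by
    have := hL.path_nodup i j
    rw [hpath, List.append_cons] at this
    exact this.of_append_left
  have hinner {x} (hx : x ∈ p ++ [u]) : x ∈ L.inner i j := by
    rw [hin, List.append_cons]
    exact List.mem_append_left _ hx
  have hinit {x} (hx : x ∈ L.a i :: (p ++ [u])) : x ∈ L.path i j := by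
    rw [hpath, List.append_cons]
    exact List.mem_append_left _ hx
  have hma : M.mate (L.a i) ∉ L.a i :: (p ++ [u]) := by
    rw [List.mem_cons, not_or]
    exact ⟨(M.adj_mate _).ne', fun h => hL.mate_a_notMem_inner hjl hmatched (hinner h)⟩
  have hmu : M.mate u ∉ L.a i :: (p ++ [u]) :=
    fun h => hE.mate_left_notMem_path hL hik hv (hinit h)
  obtain ⟨y, hyT, hy, hmy⟩ := M.exists_mate_notMem hn
    (fun e he => hL.path_adj i j e (by
      rw [hpath, List.cons_append, ← List.cons_append, pathEdges_append_cons]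
      exact Multiset.mem_add.2 (Or.inl he)))
    (fun h => hL.a_notMem_inner (h ▸ hu)) (by simp) (by simp) (hC.color_a i) hE.color_left hma hmu
  obtain ⟨r, w, hin', hmem, hyL⟩ :=
    hL.exists_inner_eq_of_mem_prefix hC hpath hE.color_left hyT hy hmy
  have huw := mem_of_mem_pairEdges hmem (Sym2.mem_mk_left u t)
  have hub : u ≠ L.b j := fun h => hL.b_notMem_inner (h ▸ hu)
  exact ⟨r, y, w, hin', by simpa [hub] using huw, hy, hyL⟩

namespace IsOptimal

lemma coverable_of_mem_ear_of_mem_path (hL : IsOptimal M L) (hC : L.IsColored M)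
    (hE : IsEar M L u R v N) (hik : i ≠ k) (hjl : j ≠ l) (hu : u ∈ L.inner i j)
    (hv : v ∈ L.inner k l) (h₁ : e₁ ∈ pairEdges (L.path i l))
    (h₂ : e₂ ∈ pairEdges (u :: (R ++ [v]))) (hm₁ : e₁ ∈ M.edgeSet) (hne : e₁ ≠ e₂) :
    Coverable G e₁ e₂ := by
  have hLs := hL.isSpanning
  obtain ⟨r, y, w, hin, huw, hy, hyL⟩ : ∃ r y w, L.inner i j = r ++ y :: w ∧ u ∈ w ∧
      M.color y = false ∧ s(y, M.mate y) ∉ L.edges := by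
    obtain ⟨r, w, hv'⟩ := List.append_of_mem hv
    obtain ⟨L', h⟩ := hE.exists_isSwitch hL hC hik hjl hu hv'
    exact hE.exists_inner_eq hLs hC hik hjl hu hv (h.toIsExchange.isOptimal hL hE.matched).2
  have hyi : y ∈ L.inner i j := by simp [hin]
  have hyv : y ≠ v := fun h => hik (hLs.inner_unique hyi (h ▸ hv)).1
  obtain ⟨u', R', N', hE'⟩ := hL.exists_isEar_of_color_eq_false hy
    (hLs.notMem_rest_of_mem_path (K33Frame.mem_path.2 (Or.inr (Or.inl hyi)))) hyL
  obtain ⟨i', j', i₀, j₀, hi', hj', hu', hy'⟩ := hE'.exists_mem_inner hL hC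
  obtain ⟨rfl, rfl⟩ := hLs.inner_unique hyi hy'
  obtain ⟨L', h⟩ := hE'.exists_isSwitch hL hC hi' hj' hu' hin
  have hL' := (h.toIsExchange.isOptimal hL hE'.matched).1
  obtain ⟨N₁, hE₁⟩ := h.exists_isEar hLs hE hE' hyv (fun hu₁ => hi' (hLs.inner_unique hu₁ hu).1)
    (fun hv₁ => hjl (hLs.inner_unique hv₁ hv).2)
  obtain ⟨t, ht, hin'⟩ := h.exists_inner_eq
  have hut : u ∈ L'.inner t j := by simp [hin', huw]
  obtain ⟨i₁, j₁, k₁, l₁, hik₁, hjl₁, hu₁, hv₁⟩ := hE₁.exists_mem_inner hL' h.isColored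
  obtain ⟨rfl, rfl⟩ := hL'.isSpanning.inner_unique hut hu₁
  obtain ⟨r₁, w₁, hv₁⟩ := List.append_of_mem hv₁
  obtain ⟨L'', h'⟩ := hE₁.exists_isSwitch hL' h.isColored hik₁ hjl₁ hu₁ hv₁
  rw [← h.path_eq l hjl.symm] at h₁
  exact (h'.toIsExchange.isOptimal hL' hE₁.matched).1.coverable_of_mem_edges h'.isColored
    (h'.mem_edges
      (K33Frame.path_subset_edges (Multiset.mem_of_le (pairEdges_le_pathEdges _) h₁))
      fun hpath => ht (hL'.isSpanning.eq_of_mem_pairEdges_path hpath h₁).1)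
    (h'.mem_edges_of_mem_ear hE₁ h₂) hm₁ (hE.matched _ h₂) hne

lemma coverable_of_left_mem_edges (hL : IsOptimal M L) (hC : L.IsColored M) (h₁ : e₁ ∈ L.edges)
    (hm₁ : e₁ ∈ M.edgeSet) (hm₂ : e₂ ∈ M.edgeSet) (hne : e₁ ≠ e₂) : Coverable G e₁ e₂ := by
  by_cases h₂ : e₂ ∈ L.edges
  · exact hL.coverable_of_mem_edges hC h₁ h₂ hm₁ hm₂ hne
  obtain ⟨u, R, v, N, hE, h₂⟩ := hL.exists_isEar_of_notMem_edges hm₂ h₂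
  obtain ⟨i, j, k, l, hik, hjl, hu, hv⟩ := hE.exists_mem_inner hL hC
  by_cases hpath : e₁ ∈ pairEdges (L.path i l)
  · exact hL.coverable_of_mem_ear_of_mem_path hC hE hik hjl hu hv hpath h₂ hm₁ hne
  obtain ⟨r, w, hv⟩ := List.append_of_mem hv
  obtain ⟨L', h⟩ := hE.exists_isSwitch hL hC hik hjl hu hv
  exact (h.toIsExchange.isOptimal hL hE.matched).1.coverable_of_mem_edges h.isColored
    (h.mem_edges h₁ hpath) (h.mem_edges_of_mem_ear hE h₂) hm₁ hm₂ hne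

lemma coverable (hL : IsOptimal M L) (hC : L.IsColored M) (hm₁ : e₁ ∈ M.edgeSet)
    (hm₂ : e₂ ∈ M.edgeSet) (hne : e₁ ≠ e₂) : Coverable G e₁ e₂ := by
  by_cases h₁ : e₁ ∈ L.edges
  · exact hL.coverable_of_left_mem_edges hC h₁ hm₁ hm₂ hne
  obtain ⟨u, R, v, N, hE, h₁⟩ := hL.exists_isEar_of_notMem_edges hm₁ h₁
  obtain ⟨i, j, k, l, hik, hjl, hu, hv⟩ := hE.exists_mem_inner hL hC
  obtain ⟨r, w, hv⟩ := List.append_of_mem hv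
  obtain ⟨L', h⟩ := hE.exists_isSwitch hL hC hik hjl hu hv
  exact (h.toIsExchange.isOptimal hL hE.matched).1.coverable_of_left_mem_edges h.isColored
    (h.mem_edges_of_mem_ear hE h₁) hm₁ hm₂ hne

end IsOptimal

end TwoEars

section Walks

variable {G : SimpleGraph V}

lemma exists_walk_support_eq (l : List V) (x y : V)
    (h : ∀ e ∈ pathEdges (x :: (l ++ [y])), e ∈ G.edgeSet) :
    ∃ w : G.Walk x y, w.support = x :: (l ++ [y]) := by
  induction l generalizing x with
  | nil =>
    have hxy : G.Adj x y := by simpa using h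
    exact ⟨.cons hxy .nil, by simp⟩
  | cons z l ih =>
    simp only [List.cons_append, pathEdges_cons_cons, Multiset.mem_cons, forall_eq_or_imp] at h
    obtain ⟨w, hw⟩ := ih z h.2
    have hxz : G.Adj x z := h.1
    exact ⟨.cons hxz w, by simp [hw]⟩

lemma pathEdges_support {x y : V} (w : G.Walk x y) :
    pathEdges w.support = (w.edges : Multiset (Sym2 V)) := by
  induction w with
  | nil => simp
  | cons h w ih =>
    rw [← w.cons_tail_support] at ih
    rw [Walk.support_cons, ← w.cons_tail_support, pathEdges_cons_cons, ih, Walk.edges_cons,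
      Multiset.cons_coe]

lemma support_eq_cons_append {x y : V} (w : G.Walk x y) (hw : w.length ≠ 0) :
    w.support = x :: (w.support.tail.dropLast ++ [y]) := by
  have hne : w.support.tail ≠ [] := by
    simpa [← List.length_pos_iff_ne_nil, Nat.pos_iff_ne_zero] using hw
  have hlast : w.support.tail.getLast hne = y := by simp
  have htail := List.dropLast_append_getLast hne
  rw [hlast] at htail
  rw [htail, Walk.cons_tail_support]

variable {a b : Fin 3 → V}

/-- The walks along all oriented edges of `K₃,₃`, given those which lead from the first colour
class to the second. -/
def linkWalk (w : ∀ i j, G.Walk (a i) (b j)) :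
    ∀ ⦃x y : Fin 3 ⊕ Fin 3⦄, K33.Adj x y → G.Walk (Sum.elim a b x) (Sum.elim a b y)
  | .inl i, .inr j, _ => w i j
  | .inr j, .inl i, _ => (w i j).reverse
  | .inl _, .inl _, h => absurd h (by simp)
  | .inr _, .inr _, h => absurd h (by simp)

lemma linkWalk_symm (w : ∀ i j, G.Walk (a i) (b j)) {x y : Fin 3 ⊕ Fin 3} (h : K33.Adj x y) :
    linkWalk w h.symm = (linkWalk w h).reverse := by
  rcases x with i | i <;> rcases y with j | j
  · simp at h
  · rfl
  · simp [linkWalk]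
  · simp at h

lemma exists_support_linkWalk_perm (w : ∀ i j, G.Walk (a i) (b j)) {x y : Fin 3 ⊕ Fin 3}
    (h : K33.Adj x y) : ∃ i j, s(x, y) = s(.inl i, .inr j) ∧
      (linkWalk w h).support.Perm (w i j).support := by
  rcases x with i | i <;> rcases y with j | j
  · simp at h
  · exact ⟨i, j, rfl, .rfl⟩
  · exact ⟨j, i, Sym2.eq_swap, by simp [linkWalk]⟩
  · simp at h

end Walks

namespace K33Frame.IsSpanning

variable {G : SimpleGraph V} {L : K33Frame V} (hL : L.IsSpanning G)
include hL

lemma exists_walk (i j : Fin 3) : ∃ w : G.Walk (L.a i) (L.b j), w.support = L.path i j :=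
  exists_walk_support_eq _ _ _ (hL.path_adj i j)

/-- The path of a spanning frame from `a i` to `b j`, as a walk. -/
noncomputable def walk (i j : Fin 3) : G.Walk (L.a i) (L.b j) := (hL.exists_walk i j).choose

lemma support_walk (i j : Fin 3) : (hL.walk i j).support = L.path i j :=
  (hL.exists_walk i j).choose_spec

lemma exists_support_linkWalk_perm_path {x y : Fin 3 ⊕ Fin 3} (h : K33.Adj x y) :
    ∃ i j, s(x, y) = s(.inl i, .inr j) ∧
      (linkWalk hL.walk h).support.Perm (L.path i j) := by
  simpa only [hL.support_walk] using exists_support_linkWalk_perm hL.walk h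

lemma branch_injective : Function.Injective (Sum.elim L.a L.b) :=
  hL.a_injective.sumElim hL.b_injective fun _ _ => hL.a_ne_b

lemma eq_of_branch_mem_path {i j : Fin 3} {z : Fin 3 ⊕ Fin 3}
    (h : Sum.elim L.a L.b z ∈ L.path i j) : z = .inl i ∨ z = .inr j := by
  rcases z with k | k
  · exact Or.inl (congrArg _ (hL.eq_of_a_mem_path h))
  · exact Or.inr (congrArg _ (hL.eq_of_b_mem_path h))

lemma odd_length_linkWalk {x y : Fin 3 ⊕ Fin 3} (h : K33.Adj x y) :
    Odd (linkWalk hL.walk h).length := by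
  obtain ⟨i, j, -, hperm⟩ := hL.exists_support_linkWalk_perm_path h
  have hlen := hperm.length_eq
  simp only [Walk.length_support, path, List.length_cons, List.length_append, List.length_nil,
    zero_add, add_left_inj] at hlen
  rw [hlen]
  exact (hL.even_inner i j).add_one

lemma eq_branch_of_mem_linkWalk {x y x' y' : Fin 3 ⊕ Fin 3} (h : K33.Adj x y)
    (h' : K33.Adj x' y') (hne : s(x, y) ≠ s(x', y')) {v : V}
    (hv : v ∈ (linkWalk hL.walk h).support) (hv' : v ∈ (linkWalk hL.walk h').support) :
    v = Sum.elim L.a L.b x ∨ v = Sum.elim L.a L.b y := by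
  obtain ⟨i, j, hxy, hperm⟩ := hL.exists_support_linkWalk_perm_path h
  obtain ⟨k, l, hxy', hperm'⟩ := hL.exists_support_linkWalk_perm_path h'
  have hij : ¬ (i = k ∧ j = l) := by
    rintro ⟨rfl, rfl⟩
    exact hne (hxy.trans hxy'.symm)
  have hend := (hL.eq_or_of_mem_path_of_mem_path (hperm.mem_iff.1 hv)
    (hperm'.mem_iff.1 hv')).resolve_left hij |>.imp And.right And.right
  rcases Sym2.eq_iff.1 hxy with ⟨rfl, rfl⟩ | ⟨rfl, rfl⟩
  · exact hend
  · exact hend.symm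

/-- The bisubdivision of `K₃,₃` formed by the nine paths of a spanning frame. -/
noncomputable def toBisubdivision : Bisubdivision K33 G where
  bv := Sum.elim L.a L.b
  bv_inj := hL.branch_injective
  link := linkWalk hL.walk
  link_isPath x y h := by
    obtain ⟨i, j, -, hperm⟩ := hL.exists_support_linkWalk_perm_path h
    exact Walk.IsPath.mk' (hperm.nodup_iff.2 (hL.path_nodup i j))
  link_odd x y h := hL.odd_length_linkWalk h
  link_symm x y h := linkWalk_symm hL.walk h
  link_branch x y h z hz := by
    obtain ⟨i, j, hxy, hperm⟩ := hL.exists_support_linkWalk_perm_path h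
    have hzij := hL.eq_of_branch_mem_path (hperm.mem_iff.1 hz)
    rcases Sym2.eq_iff.1 hxy with ⟨rfl, rfl⟩ | ⟨rfl, rfl⟩
    · exact hzij
    · exact hzij.symm
  link_meet x y x' y' h h' hne v hv hv' :=
    ⟨hL.eq_branch_of_mem_linkWalk h h' hne hv hv',
      hL.eq_branch_of_mem_linkWalk h' h hne.symm hv' hv⟩

lemma exists_mem_path_of_mem_verts {v : V} (hv : v ∈ hL.toBisubdivision.verts) :
    ∃ i j, v ∈ L.path i j := by
  obtain ⟨x, y, h, hv⟩ := hv
  obtain ⟨i, j, -, hperm⟩ := hL.exists_support_linkWalk_perm_path h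
  exact ⟨i, j, hperm.mem_iff.1 hv⟩

lemma mem_edgeSet_toBisubdivision {i j : Fin 3} {e : Sym2 V} (he : e ∈ pathEdges (L.path i j)) :
    e ∈ hL.toBisubdivision.edgeSet := by
  rw [← hL.support_walk, pathEdges_support] at he
  exact ⟨.inl i, .inr j, by simp, he⟩

variable (σ : Equiv.Perm (Fin 3))

lemma endpoints_matching : endpoints (L.matching σ) = L.verts := by
  have hpath (i j : Fin 3) :
      endpoints (if σ i = j then pairEdges (L.path i j) else pairEdges (L.inner i j)) =
        (L.inner i j : Multiset V) + if σ i = j then {L.a i} + {L.b j} else 0 := by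
    split_ifs
    · rw [endpoints_pairEdges (by simpa [path, parity_simps] using hL.even_inner i j), path,
        ← Multiset.cons_coe, ← Multiset.coe_add, ← Multiset.singleton_add, Multiset.coe_singleton]
      abel
    · rw [endpoints_pairEdges (hL.even_inner i j), add_zero]
  have hb := Equiv.sum_comp σ fun j => ({L.b j} : Multiset V)
  simp only [matching, endpoints_add, endpoints_sum, hpath, Finset.sum_add_distrib,
    Finset.sum_ite_eq, Finset.mem_univ, if_true, hb, verts]
  abel

lemma mem_path_or_mem_rest_of_mem_matching {e : Sym2 V} (he : e ∈ L.matching σ) :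
    (∃ i j, e ∈ pathEdges (L.path i j)) ∨ e ∈ L.rest := by
  rcases mem_matching.1 he with he | ⟨i, j, ⟨-, he⟩ | ⟨-, he⟩⟩
  · exact Or.inr he
  · exact Or.inl ⟨i, j, Multiset.mem_of_le (pairEdges_le_pathEdges _) he⟩
  · refine Or.inl ⟨i, j, ?_⟩
    rw [path, pathEdges_eq_add (hL.even_inner i j)]
    exact Multiset.mem_add.2 (Or.inr he)

lemma isPM_matching : IsPM G {e | e ∈ L.matching σ} := by
  have hends := hL.endpoints_matching σ
  refine ⟨fun e he => ?_, fun _ _ _ _ => trivial, fun v _ => ?_⟩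
  · exact hL.mem_edgeSet e (mem_edges.2 (hL.mem_path_or_mem_rest_of_mem_matching σ he))
  · obtain ⟨e, he, hve⟩ := mem_endpoints.1 (hends ▸ hL.mem_verts v)
    exact ⟨e, ⟨he, hve⟩, fun f ⟨hf, hvf⟩ =>
      eq_of_nodup_endpoints (hends ▸ hL.nodup) hf he hvf hve⟩

lemma mConformal_toBisubdivision : hL.toBisubdivision.MConformal {e | e ∈ L.matching σ} := by
  intro v hv
  obtain ⟨i, j, hv⟩ := hL.exists_mem_path_of_mem_verts hv
  obtain ⟨e, ⟨he, hve⟩, huniq⟩ := (hL.isPM_matching σ).2.2 v trivial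
  refine ⟨e, ⟨he, ?_, hve⟩, fun f hf => huniq f ⟨hf.1, hf.2.2⟩⟩
  rcases hL.mem_path_or_mem_rest_of_mem_matching σ he with ⟨k, l, h⟩ | h
  · exact hL.mem_edgeSet_toBisubdivision h
  · exact (hL.notMem_rest_of_mem_path hv (mem_endpoints.2 ⟨e, h, hve⟩)).elim

end K33Frame.IsSpanning

section OfBisubdivision

variable {G : SimpleGraph V} {M : Set (Sym2 V)} {v w : V} {e : Sym2 V} {i j k l : Fin 3}

lemma IsPM.eq_of_mem {f : Sym2 V} (hM : IsPM G M) (he : e ∈ M) (hf : f ∈ M) (hve : v ∈ e)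
    (hvf : v ∈ f) : e = f :=
  (hM.2.2 v trivial).unique ⟨he, hve⟩ ⟨hf, hvf⟩

lemma nodup_toMultiset (he : e ∈ G.edgeSet) : e.toMultiset.Nodup := by
  induction e with
  | _ x y =>
    have hxy : x ≠ y := G.ne_of_adj he
    have hmap : s(x, y).toMultiset = x ::ₘ {y} := rfl
    simpa [hmap] using hxy

lemma IsPM.nodup_endpoints (hM : IsPM G M) {N : Multiset (Sym2 V)} (hN : N.Nodup)
    (hNM : ∀ e ∈ N, e ∈ M) : (endpoints N).Nodup := by
  refine Multiset.nodup_bind.2 ⟨fun e he => nodup_toMultiset (hM.1 e (hNM e he)),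
    hN.pairwise fun e he f hf hne => Multiset.disjoint_left.2 fun hve hvf => hne ?_⟩
  exact hM.eq_of_mem (hNM e he) (hNM f hf) (Sym2.mem_toMultiset.1 hve) (Sym2.mem_toMultiset.1 hvf)

lemma K33_adj (i j : Fin 3) : K33.Adj (.inl i) (.inr j) := by simp

namespace Bisubdivision

variable (B : Bisubdivision K33 G)

lemma mem_verts_iff : v ∈ B.verts ↔ ∃ i j, v ∈ (B.link (K33_adj i j)).support := by
  refine ⟨?_, fun ⟨i, j, h⟩ => ⟨_, _, _, h⟩⟩
  rintro ⟨i | i, j | j, h, hv⟩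
  · simp at h
  · exact ⟨i, j, hv⟩
  · refine ⟨j, i, ?_⟩
    rwa [B.link_symm (K33_adj j i), Walk.support_reverse, List.mem_reverse] at hv
  · simp at h

lemma MConformal.notMem_verts {B : Bisubdivision K33 G} (hB : B.MConformal M) (hM : IsPM G M)
    (he : e ∈ M) (hv : v ∈ e) (hvB : v ∉ B.verts) (hw : w ∈ e) : w ∉ B.verts := by
  intro hwB
  obtain ⟨f, ⟨hf, ⟨x, y, h, hfxy⟩, hwf⟩, -⟩ := hB w hwB
  obtain rfl := hM.eq_of_mem he hf hw hwf
  exact hvB ⟨x, y, h, (B.link h).mem_support_of_mem_edges hfxy hv⟩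

variable [Finite V] (M)

/-- The frame consisting of a bisubdivision of `K₃,₃` and the edges of `M` which avoid it. -/
noncomputable def toFrame : K33Frame V where
  a i := B.bv (.inl i)
  b j := B.bv (.inr j)
  inner i j := (B.link (K33_adj i j)).support.tail.dropLast
  rest := (Set.toFinite {e | e ∈ M ∧ ∀ v ∈ e, v ∉ B.verts}).toFinset.val

lemma toFrame_path (i j : Fin 3) :
    (B.toFrame M).path i j = (B.link (K33_adj i j)).support :=
  (support_eq_cons_append _ (B.link_odd _).pos.ne').symm

variable {M}

lemma mem_toFrame_rest : e ∈ (B.toFrame M).rest ↔ e ∈ M ∧ ∀ v ∈ e, v ∉ B.verts := by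
  simp [toFrame]

lemma toFrame_path_nodup (i j : Fin 3) : ((B.toFrame M).path i j).Nodup := by
  rw [toFrame_path]
  exact (B.link_isPath _).support_nodup

lemma mem_verts_iff_mem_toFrame : v ∈ B.verts ↔ (∃ i, v = (B.toFrame M).a i) ∨
    (∃ j, v = (B.toFrame M).b j) ∨ ∃ i j, v ∈ (B.toFrame M).inner i j := by
  simp_rw [B.mem_verts_iff, ← B.toFrame_path M, K33Frame.mem_path]
  constructor
  · rintro ⟨i, j, h | h | h⟩
    · exact Or.inl ⟨i, h⟩
    · exact Or.inr (Or.inr ⟨i, j, h⟩)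
    · exact Or.inr (Or.inl ⟨j, h⟩)
  · rintro (⟨i, h⟩ | ⟨j, h⟩ | ⟨i, j, h⟩)
    · exact ⟨i, 0, Or.inl h⟩
    · exact ⟨0, j, Or.inr (Or.inr h)⟩
    · exact ⟨i, j, Or.inr (Or.inl h)⟩

lemma bv_notMem_toFrame_inner (z : Fin 3 ⊕ Fin 3) : B.bv z ∉ (B.toFrame M).inner i j := by
  intro hz
  have hpath := B.toFrame_path_nodup (M := M) i j
  have hz' : B.bv z ∈ (B.link (K33_adj i j)).support := by
    rw [← B.toFrame_path M]
    exact K33Frame.mem_path.2 (Or.inr (Or.inl hz))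
  rw [K33Frame.path, List.nodup_cons, List.nodup_append] at hpath
  rcases B.link_branch _ z hz' with rfl | rfl
  · exact hpath.1 (List.mem_append_left _ hz)
  · exact hpath.2.2.2 _ hz _ (List.mem_singleton_self _) rfl

lemma toFrame_inner_unique (h : v ∈ (B.toFrame M).inner i j) (h' : v ∈ (B.toFrame M).inner k l) :
    i = k ∧ j = l := by
  by_contra hne
  have hmem {i j : Fin 3} (h : v ∈ (B.toFrame M).inner i j) :
      v ∈ (B.link (K33_adj i j)).support := by
    rw [← B.toFrame_path M]
    exact K33Frame.mem_path.2 (Or.inr (Or.inl h))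
  have hend := (B.link_meet (K33_adj i j) (K33_adj k l) (by simpa using hne) v (hmem h)
    (hmem h')).1
  rcases hend with rfl | rfl
  · exact B.bv_notMem_toFrame_inner _ h
  · exact B.bv_notMem_toFrame_inner _ h

lemma notMem_verts_of_mem_endpoints_toFrame_rest (hv : v ∈ endpoints (B.toFrame M).rest) :
    v ∉ B.verts := by
  obtain ⟨e, he, hve⟩ := mem_endpoints.1 hv
  exact (B.mem_toFrame_rest.1 he).2 v hve

lemma toFrame_inner_nodup : (∑ i, ∑ j, ((B.toFrame M).inner i j : Multiset V)).Nodup := by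
  rw [← Finset.sum_product' Finset.univ Finset.univ fun i j =>
    ((B.toFrame M).inner i j : Multiset V)]
  refine Multiset.nodup_bind.2 ⟨fun p _ => ?_, (Finset.nodup _).pairwise fun p _ q _ hne =>
    Multiset.disjoint_left.2 fun hp hq => hne (Prod.ext_iff.2 (B.toFrame_inner_unique hp hq))⟩
  exact (B.toFrame_path_nodup p.1 p.2).of_cons.of_append_left

lemma toFrame_verts_nodup (hM : IsPM G M) : (B.toFrame M).verts.Nodup := by
  have hsum (f : Fin 3 → V) (hf : Function.Injective f) :
      (∑ i, ({f i} : Multiset V)).Nodup := by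
    have hmap : ∑ i, ({f i} : Multiset V) = Finset.univ.val.map f := Multiset.bind_singleton _ _
    exact hmap ▸ Finset.univ.nodup.map hf
  have hrest := hM.nodup_endpoints (N := (B.toFrame M).rest) (Finset.nodup _)
    fun e he => (B.mem_toFrame_rest.1 he).1
  have ha := hsum _ (B.bv_inj.comp Sum.inl_injective)
  have hb := hsum _ (B.bv_inj.comp Sum.inr_injective)
  refine Multiset.nodup_add.2 ⟨Multiset.nodup_add.2 ⟨Multiset.nodup_add.2 ⟨ha, hb, ?_⟩,
    B.toFrame_inner_nodup, ?_⟩, hrest, ?_⟩ <;>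
    refine Multiset.disjoint_left.2 fun {v} hv hv' => ?_ <;>
    simp only [Multiset.mem_add, Multiset.mem_sum, Finset.mem_univ, true_and,
      Multiset.mem_singleton, Multiset.mem_coe, or_assoc] at hv hv'
  · obtain ⟨⟨i, rfl⟩, j, hij⟩ := And.intro hv hv'
    exact Sum.inl_ne_inr (B.bv_inj hij)
  · obtain ⟨i, j, hij⟩ := hv'
    rcases hv with ⟨k, rfl⟩ | ⟨k, rfl⟩ <;> exact B.bv_notMem_toFrame_inner _ hij
  · exact B.notMem_verts_of_mem_endpoints_toFrame_rest hv' (B.mem_verts_iff_mem_toFrame.2 hv)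

lemma toFrame_isSpanning (hB : B.MConformal M) (hM : IsPM G M) :
    (B.toFrame M).IsSpanning G where
  nodup := B.toFrame_verts_nodup hM
  mem_verts v := by
    suffices v ∈ B.verts ∨ v ∈ endpoints (B.toFrame M).rest by
      rwa [B.mem_verts_iff_mem_toFrame, or_assoc, or_assoc, ← K33Frame.mem_verts_iff] at this
    by_cases hv : v ∈ B.verts
    · exact Or.inl hv
    · obtain ⟨e, ⟨he, hve⟩, -⟩ := hM.2.2 v trivial
      exact Or.inr (mem_endpoints.2
        ⟨e, B.mem_toFrame_rest.2 ⟨he, fun w => hB.notMem_verts hM he hve hv⟩, hve⟩)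
  even_inner i j := by
    have hlen := congrArg List.length (B.toFrame_path M i j)
    have hodd := B.link_odd (K33_adj i j)
    simp only [K33Frame.path, List.length_cons, List.length_append, List.length_nil,
      Walk.length_support, zero_add, add_left_inj] at hlen
    simpa [← hlen, parity_simps] using hodd
  mem_edgeSet e he := by
    rcases K33Frame.mem_edges.1 he with ⟨i, j, h⟩ | h
    · rw [toFrame_path, pathEdges_support] at h
      exact Walk.edges_subset_edgeSet _ h
    · exact hM.1 e (B.mem_toFrame_rest.1 h).1

end Bisubdivision

end OfBisubdivision

section PerfectMatchings

variable {G : SimpleGraph V} {L : K33Frame V} {F : Set (Sym2 V)} {e₁ e₂ : Sym2 V}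

lemma exists_coloredMatching (hG : IsBipartite G) (hF : IsPM G F) :
    ∃ M : ColoredMatching G, M.edgeSet = F := by
  classical
  obtain ⟨V₁, V₂, hdisj, hunion, hadj⟩ := hG
  have hV₂ (y : V) : y ∈ V₂ ↔ y ∉ V₁ := by
    refine ⟨fun h h' => Set.disjoint_left.1 hdisj h' h, fun h => ?_⟩
    exact (hunion.symm ▸ Set.mem_univ y : y ∈ V₁ ∪ V₂).resolve_left h
  have hmate (x : V) : ∃ y, s(x, y) ∈ F := by
    obtain ⟨e, ⟨he, hx⟩, -⟩ := hF.2.2 x trivial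
    obtain ⟨y, rfl⟩ := Sym2.mem_iff_exists.1 hx
    exact ⟨y, he⟩
  choose mate hmate using hmate
  refine ⟨⟨fun x => decide (x ∈ V₁), mate, fun {x y} h => ?_, fun x => ?_,
    fun x => hF.1 _ (hmate x)⟩, Set.ext fun e => ⟨?_, fun he => ?_⟩⟩
  · have hxy := (hadj h).trans (hV₂ y)
    by_cases hy : y ∈ V₁ <;> simp [hy, hxy]
  · have heq := hF.eq_of_mem (hmate (mate x)) (hmate x) (Sym2.mem_mk_left _ _)
      (Sym2.mem_mk_right _ _)
    rwa [Sym2.eq_swap (a := x), Sym2.congr_right] at heq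
  · rintro ⟨x, rfl⟩
    exact hmate x
  · obtain ⟨x, hx⟩ : ∃ x, x ∈ e := ⟨_, e.out_fst_mem⟩
    exact ⟨x, hF.eq_of_mem he (hmate x) hx (Sym2.mem_mk_left _ _)⟩

lemma K33Frame.IsSpanning.isColored_or_isColored_swap (hL : L.IsSpanning G)
    (M : ColoredMatching G) : L.IsColored M ∨ L.IsColored M.swap := by
  have hab (i j : Fin 3) : M.color (L.a i) = !M.color (L.b j) := by
    rw [Bool.eq_not, ne_eq, M.color_eq_iff_odd _ _ _ (hL.path_adj i j), Nat.not_odd_iff_even]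
    exact hL.even_inner i j
  cases h : M.color (L.b 0) with
  | false =>
    have ha (i : Fin 3) : M.color (L.a i) = true := by rw [hab i 0, h, Bool.not_false]
    exact Or.inl ⟨ha, fun j => by simpa [ha] using hab 0 j⟩
  | true =>
    have ha (i : Fin 3) : M.color (L.a i) = false := by rw [hab i 0, h, Bool.not_true]
    exact Or.inr ⟨fun i => by simp [ha], fun j => by simpa [ha] using hab 0 j⟩

lemma K33Frame.IsSpanning.coverable (hL : L.IsSpanning G) {M : ColoredMatching G}
    (h₁ : e₁ ∈ M.edgeSet) (h₂ : e₂ ∈ M.edgeSet) (hne : e₁ ≠ e₂) : Coverable G e₁ e₂ := by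
  obtain ⟨L', hL'⟩ := exists_isOptimal M hL
  rcases hL'.isSpanning.isColored_or_isColored_swap M with hC | hC
  · exact hL'.coverable hC h₁ h₂ hne
  · have hswap : IsOptimal M.swap L' := ⟨hL'.isSpanning, hL'.le⟩
    exact hswap.coverable hC h₁ h₂ hne

lemma IsPM.exists_isPM_mConformal [Finite V] (hG : IsBipartite G) (hK : ContainsK33 G)
    (hF : IsPM G F) (h₁ : e₁ ∈ F) (h₂ : e₂ ∈ F) (hne : e₁ ≠ e₂) :
    ∃ M, IsPM G M ∧ e₁ ∈ M ∧ e₂ ∈ M ∧ ∃ L : Bisubdivision K33 G, L.MConformal M := by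
  obtain ⟨B, N, hN, hB⟩ := hK
  obtain ⟨M, rfl⟩ := exists_coloredMatching hG hF
  obtain ⟨L, hL, σ, h₁, h₂⟩ := (B.toFrame_isSpanning hB hN).coverable h₁ h₂ hne
  exact ⟨_, hL.isPM_matching σ, h₁, h₂, hL.toBisubdivision, hL.mConformal_toBisubdivision σ⟩

end PerfectMatchings

section FourCycles

variable {G : SimpleGraph V} {c : V} {C : G.Walk c c}

lemma exists_opposite_edges (hC : C.IsCycle) (hlen : C.length = 4) :
    ∃ e₁ ∈ C.edges, ∃ e₂ ∈ C.edges, (∀ v ∈ e₁, v ∉ e₂) ∧ ∀ v ∈ C.support, v ∈ e₁ ∨ v ∈ e₂ := by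
  match C, hC, hlen with
  | .cons (v := x) _ (.cons (v := y) _ (.cons (v := z) _ (.cons _ .nil))), hC, _ =>
    have hnd := hC.support_nodup
    simp only [Walk.support_cons, Walk.support_nil, List.tail_cons, List.nodup_cons,
      List.mem_cons, List.not_mem_nil, or_false, not_or] at hnd
    refine ⟨s(c, x), by simp, s(y, z), by simp, fun v hv hv' => ?_, fun v hv => ?_⟩
    · rw [Sym2.mem_iff] at hv hv'
      grind
    · simp only [Walk.support_cons, Walk.support_nil, List.mem_cons, List.not_mem_nil] at hv
      simp only [Sym2.mem_iff]
      tauto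

lemma IsBrace.conformalCycle (hG : IsBrace G) (hC : C.IsCycle) (hlen : C.length = 4) :
    ConformalCycle G C := by
  obtain ⟨e₁, he₁, e₂, he₂, hdisj, hcover⟩ := exists_opposite_edges hC hlen
  have hpair : PairwiseDisjointEdges ({e₁, e₂} : Set (Sym2 V)) := by
    rintro e (rfl | rfl) f (rfl | rfl) hef v hve hvf
    exacts [hef rfl, hdisj v hve hvf, hdisj v hvf hve, hef rfl]
  obtain ⟨M, hM, hsub⟩ := hG.2.2 {e₁, e₂}
    (Set.pair_subset (C.edges_subset_edgeSet he₁) (C.edges_subset_edgeSet he₂)) hpair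
    ((Set.ncard_insert_le _ _).trans (by simp))
  have h₁ : e₁ ∈ M := hsub (Set.mem_insert _ _)
  have h₂ : e₂ ∈ M := hsub (Set.mem_insert_of_mem _ rfl)
  refine ⟨{e ∈ M | e ≠ e₁ ∧ e ≠ e₂}, fun e he => hM.1 e he.1, fun e he v hv => ⟨trivial, ?_⟩,
    fun v hv => ?_⟩
  · intro hvC
    rcases hcover v hvC with h | h
    · exact he.2.1 (IsPM.eq_of_mem hM he.1 h₁ hv h)
    · exact he.2.2 (IsPM.eq_of_mem hM he.1 h₂ hv h)
  · obtain ⟨e, ⟨he, hve⟩, huniq⟩ := hM.2.2 v trivial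
    refine ⟨e, ⟨⟨he, ?_, ?_⟩, hve⟩, fun f hf => huniq f ⟨hf.1.1, hf.2⟩⟩ <;> rintro rfl
    · exact hv.2 (C.mem_support_of_mem_edges he₁ hve)
    · exact hv.2 (C.mem_support_of_mem_edges he₂ hve)

lemma exists_isPM_of_conformalCycle {e₁ e₂ : Sym2 V} (hC : ConformalCycle G C) (he₁ : e₁ ∈ C.edges)
    (he₂ : e₂ ∈ C.edges) (hdisj : ∀ v ∈ e₁, v ∉ e₂)
    (hcover : ∀ v ∈ C.support, v ∈ e₁ ∨ v ∈ e₂) : ∃ F, IsPM G F ∧ e₁ ∈ F ∧ e₂ ∈ F := by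
  obtain ⟨N, hN⟩ := hC
  have hNC {e : Sym2 V} {v : V} (he : e ∈ N) (hv : v ∈ e) : v ∉ C.support := (hN.2.1 e he v hv).2
  have h₁C {v : V} : v ∈ e₁ → v ∈ C.support := C.mem_support_of_mem_edges he₁
  have h₂C {v : V} : v ∈ e₂ → v ∈ C.support := C.mem_support_of_mem_edges he₂
  refine ⟨insert e₁ (insert e₂ N), ⟨?_, fun _ _ _ _ => trivial, fun v _ => ?_⟩, by simp, by simp⟩
  · rintro e (rfl | rfl | he)
    exacts [C.edges_subset_edgeSet he₁, C.edges_subset_edgeSet he₂, hN.1 e he]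
  by_cases hv : v ∈ C.support
  · rcases hcover v hv with h | h
    · refine ⟨e₁, ⟨by simp, h⟩, ?_⟩
      rintro f ⟨rfl | rfl | hf, hvf⟩
      exacts [rfl, (hdisj v h hvf).elim, (hNC hf hvf hv).elim]
    · refine ⟨e₂, ⟨by simp, h⟩, ?_⟩
      rintro f ⟨rfl | rfl | hf, hvf⟩
      exacts [(hdisj v hvf h).elim, rfl, (hNC hf hvf hv).elim]
  · obtain ⟨e, ⟨he, hve⟩, huniq⟩ := hN.2.2 v ⟨trivial, hv⟩
    refine ⟨e, ⟨by simp [he], hve⟩, ?_⟩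
    rintro f ⟨rfl | rfl | hf, hvf⟩
    exacts [(hv (h₁C hvf)).elim, (hv (h₂C hvf)).elim, huniq f ⟨hf, hvf⟩]

lemma IsPM.mConformalCycle {M : Set (Sym2 V)} {e₁ e₂ : Sym2 V} (hM : IsPM G M) (h₁ : e₁ ∈ M)
    (h₂ : e₂ ∈ M) (he₁ : e₁ ∈ C.edges) (he₂ : e₂ ∈ C.edges)
    (hcover : ∀ v ∈ C.support, v ∈ e₁ ∨ v ∈ e₂) : MConformalCycle G M C := by
  intro v hv
  rcases hcover v hv with h | h
  · exact ⟨e₁, ⟨h₁, he₁, h⟩, fun f hf => hM.eq_of_mem hf.1 h₁ hf.2.2 h⟩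
  · exact ⟨e₂, ⟨h₂, he₂, h⟩, fun f hf => hM.eq_of_mem hf.1 h₂ hf.2.2 h⟩

end FourCycles

theorem statement_3_general [Finite V] (B : SimpleGraph V) (hbip : IsBipartite B)
    (hK : ContainsK33 B) {c : V} (C : B.Walk c c) (hC : C.IsCycle) (hlen : C.length = 4)
    (hconf : ConformalCycle B C) :
    ∃ M : Set (Sym2 V), IsPM B M ∧ MConformalCycle B M C ∧
      ∃ L : Bisubdivision K33 B, L.MConformal M := by
  obtain ⟨e₁, he₁, e₂, he₂, hdisj, hcover⟩ := exists_opposite_edges hC hlen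
  have hne : e₁ ≠ e₂ := fun h => hdisj _ e₁.out_fst_mem (h ▸ e₁.out_fst_mem)
  obtain ⟨F, hF, h₁, h₂⟩ := exists_isPM_of_conformalCycle hconf he₁ he₂ hdisj hcover
  obtain ⟨M, hM, h₁, h₂, hL⟩ := hF.exists_isPM_mConformal hbip hK h₁ h₂ hne
  exact ⟨M, hM, hM.mConformalCycle h₁ h₂ he₁ he₂ hcover, hL⟩

/-- in a brace containing `K₃,₃`, for every 4-cycle `C` there is a perfect
matching `M` for which `C` is `M`-conformal and some bisubdivision of `K₃,₃` is
`M`-conformal. -/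
theorem statement_3 {V : Type*} [Fintype V] [DecidableEq V] (B : SimpleGraph V)
    (hbip : IsBipartite B) (hbrace : IsBrace B) (hK : ContainsK33 B)
    {c : V} (C : B.Walk c c) (hC : C.IsCycle) (hlen : C.length = 4) :
    ∃ M : Set (Sym2 V), IsPM B M ∧ MConformalCycle B M C ∧
      ∃ L : Bisubdivision K33 B, L.MConformal M :=
  statement_3_general B hbip hK C hC hlen (hbrace.conformalCycle hC hlen)

end Paper
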